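/- arXiv:1612.01732 — 2 statements merged into one kernel-verified Lean document; each statement's English description precedes it below -/
import Mathlib

section
/- For every positive integer m and every integer n ≥ 3, there is an injective group homomorphism from G(P_m) into G(C_n) if and only if m + 1 ≤ n. -/
open SimpleGraph

/-- The set of commutator relations of a graph: one commutator for each edge. -/
def raagRels {V : Type} (G : SimpleGraph V) : Set (FreeGroup V) :=
  {r | ∃ u v : V, G.Adj u v ∧
    r = FreeGroup.of u * FreeGroup.of v * (FreeGroup.of u)⁻¹ * (FreeGroup.of v)⁻¹}

/-- The right-angled Artin group `A(G)` of a graph `G`. -/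
abbrev RAAG {V : Type} (G : SimpleGraph V) : Type := PresentedGroup (raagRels G)

/-- `G(Γ) = A(Γᶜ)`, the RAAG on the complement graph. -/
abbrev GG {V : Type} (G : SimpleGraph V) : Type := RAAG Gᶜ

/-- A linear forest: an acyclic graph all of whose vertices have degree at most 2. -/
def IsLinearForest {V : Type} (G : SimpleGraph V) : Prop :=
  G.IsAcyclic ∧ ∀ v : V, (G.neighborSet v).ncard ≤ 2

/-- The star of a vertex: the vertex together with its neighbours. -/
def starSet {V : Type} (G : SimpleGraph V) (v : V) : Set V :=
  insert v (G.neighborSet v)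

/-- The double `D_v(G)` of `G` along the star of `v`: original vertices together with
copies of the vertices outside the star. -/
def GraphDouble {V : Type} (G : SimpleGraph V) (v : V) :
    SimpleGraph (V ⊕ {w : V // w ∉ starSet G v}) :=
  SimpleGraph.fromRel (fun x y =>
    match x, y with
    | Sum.inl a, Sum.inl b => G.Adj a b
    | Sum.inr a, Sum.inr b => G.Adj a.1 b.1
    | Sum.inl a, Sum.inr b => a ∈ starSet G v ∧ G.Adj a b.1
    | Sum.inr _, Sum.inl _ => False)

/-- Subdivision of the edge `[v,w]` of `Λ`, with `none` as the new vertex. -/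
def SubdivEdge {V : Type} (Λ : SimpleGraph V) (v w : V) : SimpleGraph (Option V) :=
  SimpleGraph.fromRel (fun x y =>
    match x, y with
    | some a, some b => Λ.Adj a b ∧ ¬((a = v ∧ b = w) ∨ (a = w ∧ b = v))
    | some a, none => a = v ∨ a = w
    | none, some _ => False
    | none, none => False)

/-- The graph `Λ_u⁻(w₁,w₂)`, with `none` as the new vertex `v`. -/
def MinusGraph {V : Type} (Λ : SimpleGraph V) (u w₁ w₂ : V) : SimpleGraph (Option V) :=
  SimpleGraph.fromRel (fun x y =>
    match x, y with
    | some a, some b => Λ.Adj a b ∧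
        ¬((a = u ∧ b = w₁) ∨ (a = w₁ ∧ b = u) ∨ (a = u ∧ b = w₂) ∨ (a = w₂ ∧ b = u))
    | some a, none => a = w₁ ∨ a = u ∨ a = w₂
    | none, some _ => False
    | none, none => False)

/-- The graph `Λ_u⁺(w₁,w₂)`: `Λ_u⁻(w₁,w₂)` with the edge `[u,w₂]` added back. -/
def PlusGraph {V : Type} (Λ : SimpleGraph V) (u w₁ w₂ : V) : SimpleGraph (Option V) :=
  SimpleGraph.fromRel (fun x y =>
    (MinusGraph Λ u w₁ w₂).Adj x y ∨ (x = some u ∧ y = some w₂))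

/-!
Write `A(S)` for the subgroup of `A(Γ)` generated by a set `S` of vertices and `Lk v` for the set of
neighbours of `v`. For `v ∉ S`, the group `A(S ∪ {v})` is the semidirect product of `A(S)` with the
free group on the conjugates `p v p⁻¹`, which are indexed by the cosets of `A(S ∩ Lk v)` in `A(S)`.
An element of `A(S)` that preserves the conjugacy class of a nontrivial `w` in this free group
permutes the letters of a shortest conjugate of `w`, so that a power of it fixes a coset and is
conjugate into `A(S ∩ Lk v)`. By induction on `S`, a subgroup `ℤᵏ` of `A(Γ)` forces a clique of size
`k` in `Γ`. If the letters are taken from a conjugate of a commutator, there are two of them, and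
the same induction shows that a subgroup `F₂ × ℤᵏ` forces a clique of size `k` all of whose vertices
are adjacent to both members of a nonadjacent pair.

In the complement of `C_n` the cliques are the independent sets `T` of `C_n`. Since `T` and `T + 1`
are disjoint, `2k ≤ n` in the first case; in the second case the pair is `{u, u + 1}`, and
`2k + 3 ≤ n` because `T ∪ {u}` and its translate are disjoint and neither contains `u + 2`. For
`m ≥ n` the complement of `P_m` violates one of these bounds, according to the parity of `n`.
Conversely, for `m < n` the path `P_m` is an induced subgraph of `C_n`, and induced subgraphs give
retracts of right-angled Artin groups.
-/

/-! ### Free groups -/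

section FreeGroups

theorem not_commute_freeGroup_of {X : Type*} {a b : X} (h : a ≠ b) :
    ¬Commute (FreeGroup.of a) (FreeGroup.of b) := by
  classical
  intro hab
  have := congrArg FreeGroup.toWord hab.eq
  simp [FreeGroup.toWord_mul, h] at this

open Classical in
theorem subsingleton_of_freeGroup_central {X : Type*} {z : FreeGroup X} (hz : z ≠ 1)
    (hc : ∀ g, Commute g z) : Subsingleton X := by
  by_contra hX
  rw [not_subsingleton_iff_nontrivial] at hX
  have hnil : z.toWord ≠ [] := by simpa [FreeGroup.toWord_eq_nil_iff] using hz
  obtain ⟨x, hx⟩ := exists_ne (z.toWord.head hnil).1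
  -- No cancellation occurs when `z` is conjugated by a letter `x` which is not the first letter
  -- of `z`, and whose sign prevents cancellation at the end of `z`.
  set s : Bool := !(z.toWord.getLast hnil).2 with hs
  have hred : FreeGroup.IsReduced ((x, s) :: (z.toWord ++ [(x, !s)])) := by
    have hz : FreeGroup.IsReduced z.toWord := FreeGroup.isReduced_toWord
    unfold FreeGroup.IsReduced at hz ⊢
    rw [List.isChain_cons, List.isChain_append]
    refine ⟨fun y hy h => ?_, hz, by simp, fun a ha b hb _ => ?_⟩
    · rw [List.head?_append_of_ne_nil _ hnil, List.head?_eq_some_head hnil] at hy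
      obtain rfl : z.toWord.head hnil = y := by simpa using hy
      exact absurd h hx
    · rw [List.getLast?_eq_some_getLast hnil] at ha
      obtain rfl : z.toWord.getLast hnil = a := by simpa using ha
      obtain rfl : (x, !s) = b := by simpa using hb
      simp [hs]
  have hconj : FreeGroup.mk ((x, s) :: (z.toWord ++ [(x, !s)])) = z := by
    calc FreeGroup.mk ((x, s) :: (z.toWord ++ [(x, !s)]))
        = FreeGroup.mk [(x, s)] * FreeGroup.mk z.toWord * (FreeGroup.mk [(x, s)])⁻¹ := by
          simp [FreeGroup.mul_mk, FreeGroup.inv_mk, FreeGroup.invRev]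
      _ = z := by rw [FreeGroup.mk_toWord, (hc _).eq, mul_inv_cancel_right]
  have hlength := congrArg (List.length ∘ FreeGroup.toWord) hconj
  simp only [Function.comp_apply, FreeGroup.toWord_mk, hred.reduce_eq, List.length_cons,
    List.length_append, List.length_nil] at hlength
  omega

theorem isCyclic_freeGroup_of_subsingleton (X : Type*) [Subsingleton X] :
    IsCyclic (FreeGroup X) := by
  rcases isEmpty_or_nonempty X with _ | ⟨⟨x⟩⟩
  · exact isCyclic_of_subsingleton
  · have : Unique X := uniqueOfSubsingleton x
    exact FreeGroup.mulEquivIntOfUnique.isCyclic.mpr inferInstance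

theorem isMulTorsionFree_of_isFreeGroup (F : Type*) [Group F] [IsFreeGroup F] :
    IsMulTorsionFree F :=
  (IsFreeGroup.toFreeGroup F).injective.isMulTorsionFree (IsFreeGroup.toFreeGroup F).toMonoidHom

theorem isFreeGroup_of_injective {G F : Type*} [Group G] [Group F] [IsFreeGroup F] {φ : G →* F}
    (hφ : Function.Injective φ) : IsFreeGroup G :=
  IsFreeGroup.ofMulEquiv (MonoidHom.ofInjective hφ).symm

variable {F : Type*} [Group F] [IsFreeGroup F]

theorem isCyclic_of_isFreeGroup_of_central {z : F} (hz : z ≠ 1) (hc : ∀ g, Commute g z) :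
    IsCyclic F := by
  have : Subsingleton (IsFreeGroup.Generators F) := by
    refine subsingleton_of_freeGroup_central (z := IsFreeGroup.toFreeGroup F z) (by simpa) ?_
    intro g
    simpa using (hc ((IsFreeGroup.toFreeGroup F).symm g)).map (IsFreeGroup.toFreeGroup F)
  exact (IsFreeGroup.toFreeGroup F).isCyclic.mpr (isCyclic_freeGroup_of_subsingleton _)

theorem isCyclic_of_isFreeGroup_of_commute (hc : ∀ a b : F, Commute a b) : IsCyclic F := by
  rcases subsingleton_or_nontrivial F with _ | _
  · exact isCyclic_of_subsingleton
  · obtain ⟨z, hz⟩ := exists_ne (1 : F)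
    exact isCyclic_of_isFreeGroup_of_central hz fun g => hc g z

theorem commute_of_commute_of_ne_one {z a b : F} (hz : z ≠ 1) (ha : Commute a z)
    (hb : Commute b z) : Commute a b := by
  let C := Subgroup.centralizer {z}
  have hC {g : F} : g ∈ C ↔ Commute g z := Subgroup.mem_centralizer_singleton_iff
  have : IsCyclic C := isCyclic_of_isFreeGroup_of_central (z := ⟨z, hC.2 (.refl z)⟩)
    (by simpa using hz) fun g => Subtype.ext (hC.1 g.2)
  have hcomm : IsMulCommutative C := IsCyclic.isMulCommutative
  exact congrArg Subtype.val (hcomm.is_comm.comm ⟨a, hC.2 ha⟩ ⟨b, hC.2 hb⟩)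

theorem commute_of_commute_pow {a b : F} {n : ℕ} (hn : n ≠ 0) (h : Commute (a ^ n) (b ^ n)) :
    Commute a b := by
  have := isMulTorsionFree_of_isFreeGroup F
  rcases eq_or_ne a 1 with rfl | ha
  · exact .one_left b
  rcases eq_or_ne b 1 with rfl | hb
  · exact .one_right a
  have h' : Commute a (b ^ n) :=
    commute_of_commute_of_ne_one (by simpa [hn]) (.self_pow a n) h.symm
  exact commute_of_commute_of_ne_one (by simpa [hn]) h' (.self_pow b n)

theorem mulAut_sq_of_isCyclic_of_infinite {M : Type*} [Group M] [IsCyclic M] [Infinite M]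
    (σ : MulAut M) : σ ^ 2 = 1 := by
  have hunits : ∀ k, k = 0 → ∀ u : (ZMod k)ˣ, u ^ 2 = 1 := by
    rintro _ rfl u
    exact Int.units_sq u
  apply (IsCyclic.mulAutMulEquiv M).injective
  rw [map_pow, map_one, hunits _ Nat.card_eq_zero_of_infinite]

theorem exists_not_commute_of_normal (M : Subgroup F) [M.Normal] (hM : M ≠ ⊥) {a b : F}
    (hab : ¬Commute a b) : ∃ x ∈ M, ∃ y ∈ M, ¬Commute x y := by
  by_contra! hcomm
  have hcyclic : IsCyclic M :=
    isCyclic_of_isFreeGroup_of_commute fun x y => Subtype.ext (hcomm x x.2 y y.2)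
  have := isMulTorsionFree_of_isFreeGroup F
  obtain ⟨⟨t, htM⟩, ht⟩ := Subgroup.ne_bot_iff_exists_ne_one.mp hM
  have hinf : Infinite M := Infinite.of_injective _
    (injective_pow_iff_not_isOfFinOrder.2 (not_isOfFinOrder_of_isMulTorsionFree ht))
  -- Conjugation by a square acts trivially on `M ≅ ℤ`, because `Aut ℤ = {±1}`.
  have hsq (g : F) : Commute (g ^ 2) t := by
    have h : MulAut.conjNormal (H := M) (g ^ 2) = 1 := by
      rw [map_pow, mulAut_sq_of_isCyclic_of_infinite]
    have ht : g ^ 2 * t * (g ^ 2)⁻¹ = t :=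
      congrArg (fun σ : MulAut M => (σ ⟨t, htM⟩ : F)) h
    exact mul_inv_eq_iff_eq_mul.mp ht
  exact hab (commute_of_commute_pow two_ne_zero
    (commute_of_commute_of_ne_one (by simpa using ht) (hsq a) (hsq b)))

end FreeGroups

/-! ### Letters of minimal conjugates -/

section Letters

open FreeGroup (of)
open scoped commutatorElement

variable {X : Type*} [DecidableEq X]

/-- The generators that occur in the reduced word of an element of a free group. -/
def letters (w : FreeGroup X) : Finset X :=
  (w.toWord.map Prod.fst).toFinset

/-- An element of a free group is *conjugacy-minimal* if its reduced word is the shortest in its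
conjugacy class. -/
def IsConjMinimal (w : FreeGroup X) : Prop :=
  ∀ g : FreeGroup X, w.norm ≤ (g * w * g⁻¹).norm

/-- The retraction of a free group that kills the generators outside `S`. -/
def restrictLetters (S : Finset X) : FreeGroup X →* FreeGroup X :=
  FreeGroup.lift fun y => if y ∈ S then of y else 1

theorem mem_letters {w : FreeGroup X} {x : X} : x ∈ letters w ↔ ∃ b, (x, b) ∈ w.toWord := by
  simp [letters]

theorem letters_nonempty {w : FreeGroup X} (hw : w ≠ 1) : (letters w).Nonempty := by
  simpa [letters, List.toFinset_nonempty_iff] using hw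

theorem restrictLetters_mk (S : Finset X) (L : List (X × Bool)) :
    restrictLetters S (FreeGroup.mk L) = FreeGroup.mk (L.filter (·.1 ∈ S)) := by
  induction L with
  | nil => exact map_one _
  | cons p L ih =>
    obtain ⟨y, b⟩ := p
    have hcons (L' : List (X × Bool)) :
        FreeGroup.mk ((y, b) :: L') = FreeGroup.mk [(y, b)] * FreeGroup.mk L' := rfl
    rw [hcons, map_mul, ih]
    by_cases hy : y ∈ S
    · have hletter : restrictLetters S (FreeGroup.mk [(y, b)]) = FreeGroup.mk [(y, b)] := by
        cases b <;> simp [restrictLetters, hy, of, FreeGroup.inv_mk, FreeGroup.invRev]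
      rw [hletter, List.filter_cons_of_pos (by simpa using hy), ← hcons]
    · have hletter : restrictLetters S (FreeGroup.mk [(y, b)]) = 1 := by
        cases b <;> simp [restrictLetters, hy]
      rw [hletter, List.filter_cons_of_neg (by simpa using hy), one_mul]

theorem restrictLetters_eq_mk_filter (S : Finset X) (w : FreeGroup X) :
    restrictLetters S w = FreeGroup.mk (w.toWord.filter (·.1 ∈ S)) := by
  rw [← restrictLetters_mk, FreeGroup.mk_toWord]

theorem restrictLetters_of_subset {S : Finset X} {w : FreeGroup X} (h : letters w ⊆ S) :
    restrictLetters S w = w := by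
  rw [restrictLetters_eq_mk_filter, List.filter_eq_self.mpr, FreeGroup.mk_toWord]
  exact fun p hp => decide_eq_true (h (mem_letters.2 ⟨p.2, hp⟩))

theorem norm_restrictLetters_lt {S : Finset X} {w : FreeGroup X} (h : ¬letters w ⊆ S) :
    (restrictLetters S w).norm < w.norm := by
  obtain ⟨x, hx, hxS⟩ := Finset.not_subset.mp h
  obtain ⟨b, hb⟩ := mem_letters.mp hx
  rw [restrictLetters_eq_mk_filter]
  refine FreeGroup.norm_mk_le.trans_lt (lt_of_le_of_ne (List.length_filter_le _ _) fun hlen => ?_)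
  exact hxS (by simpa using List.length_filter_eq_length_iff.mp hlen _ hb)

theorem commute_restrictLetters_singleton (x : X) (a b : FreeGroup X) :
    Commute (restrictLetters {x} a) (restrictLetters {x} b) := by
  have hfactor : restrictLetters {x} = (zpowersHom (FreeGroup X) (of x)).comp
      (FreeGroup.lift fun y => if y = x then Multiplicative.ofAdd 1 else 1) := by
    ext y
    by_cases hy : y = x <;> simp [restrictLetters, hy]
  rw [hfactor]
  exact (Commute.all _ _).map (zpowersHom (FreeGroup X) (of x))

theorem nontrivial_letters_of_isConj_commutator {a b w : FreeGroup X} (hw : IsConj ⁅a, b⁆ w)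
    (hw1 : w ≠ 1) : (letters w).Nontrivial := by
  obtain ⟨x, hx⟩ := letters_nonempty hw1
  by_contra hsub
  have hletters : letters w ⊆ {x} := fun y hy => by
    simpa using (Set.not_nontrivial_iff.mp hsub) hy hx
  have hone : restrictLetters {x} ⁅a, b⁆ = 1 := by
    rw [map_commutatorElement, commutatorElement_eq_one_iff_commute]
    exact commute_restrictLetters_singleton x a b
  have hconj := (restrictLetters {x}).map_isConj hw
  rw [hone, isConj_one_right, restrictLetters_of_subset hletters] at hconj
  exact hw1 hconj

theorem exists_isConjMinimal (w : FreeGroup X) : ∃ w', IsConj w w' ∧ IsConjMinimal w' := by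
  let c := Function.argmin fun g : FreeGroup X => (g * w * g⁻¹).norm
  refine ⟨c * w * c⁻¹, isConj_iff.2 ⟨c, rfl⟩, fun g => ?_⟩
  have h := Function.argmin_le (fun g : FreeGroup X => (g * w * g⁻¹).norm) (g * c)
  simpa [c, mul_assoc] using h

theorem IsConjMinimal.letters_subset {w w' : FreeGroup X} (hw' : IsConjMinimal w')
    (h : IsConj w w') : letters w' ⊆ letters w := by
  by_contra hsub
  have hconj : IsConj w (restrictLetters (letters w) w') := by
    simpa [restrictLetters_of_subset] using (restrictLetters (letters w)).map_isConj h
  obtain ⟨g, hg⟩ := isConj_iff.1 (h.symm.trans hconj)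
  exact (norm_restrictLetters_lt hsub).not_ge (hg ▸ hw' g)

theorem toWord_map_of_injective {f : X → X} (hf : Function.Injective f) (w : FreeGroup X) :
    (FreeGroup.map f w).toWord = w.toWord.map fun p => (f p.1, p.2) := by
  have hred : FreeGroup.IsReduced (w.toWord.map fun p => (f p.1, p.2)) := by
    have hw : FreeGroup.IsReduced w.toWord := FreeGroup.isReduced_toWord
    unfold FreeGroup.IsReduced at hw ⊢
    rw [List.isChain_map]
    exact hw.imp fun a b h h' => h (hf h')
  rw [← hred.reduce_eq, ← FreeGroup.toWord_mk, ← FreeGroup.map.mk, FreeGroup.mk_toWord]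

theorem letters_map {f : X → X} (hf : Function.Injective f) (w : FreeGroup X) :
    letters (FreeGroup.map f w) = (letters w).image f := by
  ext x
  simp only [mem_letters, toWord_map_of_injective hf, List.mem_map, Finset.mem_image, Prod.exists,
    Prod.mk.injEq]
  grind

theorem IsConjMinimal.map {w : FreeGroup X} (hw : IsConjMinimal w) {f : X → X}
    (hf : Function.Injective f) (h : IsConj w (FreeGroup.map f w)) :
    IsConjMinimal (FreeGroup.map f w) := by
  intro g
  obtain ⟨c, hc⟩ := isConj_iff.1 h
  have hnorm : (FreeGroup.map f w).norm = w.norm := by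
    simp [FreeGroup.norm, toWord_map_of_injective hf]
  rw [hnorm, ← hc]
  simpa [mul_assoc] using hw (g * c)

variable {H : Type*} [Group H] [MulAction H X]

-- An element preserving the conjugacy class of `w` permutes the letters of a shortest conjugate.
theorem exists_pow_smul_eq_of_mem_letters (w : FreeGroup X) :
    ∃ w', IsConj w w' ∧ ∃ n ≠ 0, ∀ h : H, IsConj w (FreeGroup.map (h • ·) w) →
      ∀ x ∈ letters w', h ^ n • x = x := by
  obtain ⟨w', hww', hmin⟩ := exists_isConjMinimal w
  refine ⟨w', hww', Fintype.card (Equiv.Perm (letters w')), Fintype.card_ne_zero, ?_⟩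
  intro h hh x hx
  have hconj : IsConj w' (FreeGroup.map (h • ·) w') :=
    (hww'.symm.trans hh).trans ((FreeGroup.map (h • ·)).map_isConj hww')
  have hinj : Function.Injective fun x : X => h • x := MulAction.injective h
  have hmaps (y : X) (hy : y ∈ letters w') : h • y ∈ letters w' := by
    apply (hmin.map hinj hconj).letters_subset hconj
    rw [letters_map hinj]
    exact Finset.mem_image_of_mem _ hy
  let σ := (MulAction.toPermHom H X h).subtypePermOfFintype hmaps
  have hσ (k : ℕ) : ((σ ^ k) ⟨x, hx⟩ : X) = h ^ k • x := by
    induction k with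
    | zero => simp
    | succ k ih => rw [pow_succ', pow_succ', Equiv.Perm.mul_apply, mul_smul, ← ih]; rfl
  rw [← hσ, pow_card_eq_one, Equiv.Perm.one_apply]

end Letters

section FixedGenerators

open scoped commutatorElement

variable {H X : Type*} [Group H] [MulAction H X]

theorem exists_pow_smul_eq_of_ne_one {w : FreeGroup X} (hw : w ≠ 1) :
    ∃ x : X, ∃ n ≠ 0, ∀ h : H, IsConj w (FreeGroup.map (h • ·) w) → h ^ n • x = x := by
  classical
  obtain ⟨w', hww', n, hn, hfix⟩ := exists_pow_smul_eq_of_mem_letters (H := H) w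
  obtain ⟨x, hx⟩ := letters_nonempty (w := w') fun h => hw (by simpa [h] using hww')
  exact ⟨x, n, hn, fun h hh => hfix h hh x hx⟩

theorem exists_two_pow_smul_eq_of_not_commute {a b : FreeGroup X} (hab : ¬Commute a b) :
    ∃ x y : X, x ≠ y ∧ ∃ n ≠ 0, ∀ h : H, IsConj ⁅a, b⁆ (FreeGroup.map (h • ·) ⁅a, b⁆) →
      h ^ n • x = x ∧ h ^ n • y = y := by
  classical
  obtain ⟨w', hww', n, hn, hfix⟩ := exists_pow_smul_eq_of_mem_letters (H := H) ⁅a, b⁆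
  have hw' : w' ≠ 1 := by
    rintro rfl
    exact hab (commutatorElement_eq_one_iff_commute.1 (isConj_one_left.1 hww'))
  obtain ⟨x, hx, y, hy, hxy⟩ := nontrivial_letters_of_isConj_commutator hww' hw'
  exact ⟨x, y, hxy, n, hn, fun h hh => ⟨hfix h hh x hx, hfix h hh y hy⟩⟩

end FixedGenerators

/-! ### Special subgroups and retractions -/

namespace RAAG

section Basic

variable {V : Type} {Γ : SimpleGraph V}

/-- The generator of `A(Γ)` attached to a vertex. -/
def gen (Γ : SimpleGraph V) (v : V) : RAAG Γ := PresentedGroup.of v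

theorem commute_gen {u v : V} (h : Γ.Adj u v) : Commute (gen Γ u) (gen Γ v) := by
  have hrel : PresentedGroup.mk (raagRels Γ) (FreeGroup.of u * FreeGroup.of v *
      (FreeGroup.of u)⁻¹ * (FreeGroup.of v)⁻¹) = 1 :=
    PresentedGroup.one_of_mem ⟨u, v, h, rfl⟩
  simp only [map_mul, map_inv] at hrel
  exact mul_inv_eq_iff_eq_mul.mp (mul_inv_eq_one.mp hrel)

/-- The universal property of `A(Γ)`: a family of elements that commute along the edges of `Γ`
extends to a homomorphism. -/
def lift {G : Type*} [Group G] (f : V → G) (hf : ∀ u v, Γ.Adj u v → Commute (f u) (f v)) :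
    RAAG Γ →* G :=
  PresentedGroup.toGroup (rels := raagRels Γ) (f := f) <| by
    rintro r ⟨u, v, h, rfl⟩
    simp only [map_mul, map_inv, FreeGroup.lift_apply_of]
    exact mul_inv_eq_one.mpr (mul_inv_eq_iff_eq_mul.mpr (hf u v h))

@[simp] theorem lift_gen {G : Type*} [Group G] (f : V → G)
    (hf : ∀ u v, Γ.Adj u v → Commute (f u) (f v)) (v : V) : lift f hf (gen Γ v) = f v :=
  PresentedGroup.toGroup.of _

theorem hom_ext {G : Type*} [Group G] {φ ψ : RAAG Γ →* G}
    (h : ∀ v, φ (gen Γ v) = ψ (gen Γ v)) : φ = ψ :=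
  PresentedGroup.ext h

/-- The special subgroup of `A(Γ)` generated by a set of vertices. -/
def special (Γ : SimpleGraph V) (S : Set V) : Subgroup (RAAG Γ) :=
  Subgroup.closure (gen Γ '' S)

theorem special_le {S : Set V} {H : Subgroup (RAAG Γ)} (h : ∀ v ∈ S, gen Γ v ∈ H) :
    special Γ S ≤ H :=
  (Subgroup.closure_le H).2 (Set.image_subset_iff.2 h)

theorem gen_mem_special {S : Set V} {v : V} (h : v ∈ S) : gen Γ v ∈ special Γ S :=
  Subgroup.subset_closure ⟨v, h, rfl⟩

theorem special_mono {S T : Set V} (h : S ⊆ T) : special Γ S ≤ special Γ T :=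
  special_le fun _ hv => gen_mem_special (h hv)

theorem special_empty : special Γ ∅ = ⊥ := by simp [special]

theorem special_univ : special Γ Set.univ = ⊤ :=
  eq_top_iff.2 fun g _ =>
    PresentedGroup.generated_by _ (special Γ Set.univ) (fun _ => gen_mem_special trivial) g

theorem commute_gen_of_mem_special {v : V} {S : Set V} (hS : S ⊆ Γ.neighborSet v) {g : RAAG Γ}
    (h : g ∈ special Γ S) : Commute g (gen Γ v) :=
  Subgroup.mem_centralizer_singleton_iff.1 <|
    special_le (H := Subgroup.centralizer {gen Γ v})
      (fun _ hu => Subgroup.mem_centralizer_singleton_iff.2 (commute_gen (hS hu)).symm) h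

open Classical in
/-- The retraction of `A(Γ)` onto a special subgroup that kills all other generators, viewed as an
endomorphism of `A(Γ)`. -/
noncomputable def retract (Γ : SimpleGraph V) (S : Set V) : RAAG Γ →* RAAG Γ :=
  lift (fun v => if v ∈ S then gen Γ v else 1) fun u v h => by
    split_ifs
    exacts [commute_gen h, .one_right _, .one_left _, .one_left _]

theorem retract_gen_of_mem {S : Set V} {v : V} (h : v ∈ S) : retract Γ S (gen Γ v) = gen Γ v := by
  simp [retract, h]

theorem retract_gen_of_notMem {S : Set V} {v : V} (h : v ∉ S) : retract Γ S (gen Γ v) = 1 := by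
  simp [retract, h]

theorem retract_retract (S T : Set V) (g : RAAG Γ) :
    retract Γ S (retract Γ T g) = retract Γ (S ∩ T) g := by
  suffices h : (retract Γ S).comp (retract Γ T) = retract Γ (S ∩ T) from DFunLike.congr_fun h g
  refine hom_ext fun v => ?_
  by_cases hS : v ∈ S <;> by_cases hT : v ∈ T <;> simp [retract, hS, hT]

theorem retract_mem (S : Set V) (g : RAAG Γ) : retract Γ S g ∈ special Γ S := by
  refine PresentedGroup.generated_by _ ((special Γ S).comap (retract Γ S)) (fun v => ?_) g
  change retract Γ S (gen Γ v) ∈ special Γ S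
  by_cases hv : v ∈ S
  · exact (retract_gen_of_mem hv).symm ▸ gen_mem_special hv
  · exact (retract_gen_of_notMem hv).symm ▸ one_mem _

theorem retract_of_mem {S : Set V} {g : RAAG Γ} (h : g ∈ special Γ S) : retract Γ S g = g :=
  special_le (H := (retract Γ S).eqLocus (MonoidHom.id _)) (fun _ => retract_gen_of_mem) h

theorem retract_mem_inter {S T : Set V} {g : RAAG Γ} (h : g ∈ special Γ T) :
    retract Γ S g ∈ special Γ (S ∩ T) := by
  rw [← retract_of_mem h, retract_retract]
  exact retract_mem _ _

end Basic

/-! ### The kernel of a retraction -/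

section Kernel

open scoped commutatorElement

/-- The action of `H` on the free group on `X` that permutes the generators. -/
def permuteGenerators (H X : Type*) [Group H] [MulAction H X] : H →* MulAut (FreeGroup X) where
  toFun h := FreeGroup.freeGroupCongr (MulAction.toPerm h)
  map_one' := MulEquiv.toMonoidHom_injective (by ext; simp)
  map_mul' a b := MulEquiv.toMonoidHom_injective (by ext; simp [mul_smul])

theorem permuteGenerators_apply {H X : Type*} [Group H] [MulAction H X] (h : H)
    (w : FreeGroup X) : permuteGenerators H X h w = FreeGroup.map (h • ·) w := rfl

variable {V : Type} {Γ : SimpleGraph V}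

/-- The cosets in `A(S)` of the subgroup `A(S ∩ Lk v)`, which centralizes `v`. -/
abbrev LinkCoset (Γ : SimpleGraph V) (v : V) (S : Set V) : Type :=
  special Γ S ⧸ (special Γ (S ∩ Γ.neighborSet v)).subgroupOf (special Γ S)

/-- The model of `A(S ∪ {v})` as the semidirect product of `A(S)` with a free group: the free
generator at a coset `p A(S ∩ Lk v)` stands for the conjugate `p v p⁻¹`. -/
abbrev LinkSemidirect (Γ : SimpleGraph V) (v : V) (S : Set V) : Type :=
  FreeGroup (LinkCoset Γ v S) ⋊[permuteGenerators (special Γ S) (LinkCoset Γ v S)] special Γ S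

theorem smul_linkCoset_eq_iff {v : V} {S : Set V} (h p : special Γ S) :
    h • (p : LinkCoset Γ v S) = p ↔
      (p : RAAG Γ)⁻¹ * h * p ∈ special Γ (S ∩ Γ.neighborSet v) := by
  change ((h * p : special Γ S) : LinkCoset Γ v S) = p ↔ _
  rw [eq_comm, QuotientGroup.eq, Subgroup.mem_subgroupOf]
  simp [mul_assoc]

open Classical in
/-- The image of a generator of `A(Γ)` in the semidirect product model of `A(S ∪ {v})`. -/
noncomputable def semidirectGen (Γ : SimpleGraph V) (v : V) (S : Set V) (u : V) :
    LinkSemidirect Γ v S :=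
  if u = v then SemidirectProduct.inl (FreeGroup.of ((1 : special Γ S) : LinkCoset Γ v S))
  else if h : u ∈ S then SemidirectProduct.inr ⟨gen Γ u, gen_mem_special h⟩ else 1

theorem commute_semidirectGen_self {u v : V} (S : Set V) (h : Γ.Adj u v) :
    Commute (semidirectGen Γ v S u) (semidirectGen Γ v S v) := by
  by_cases hu : u ∈ S
  · have hfix : (⟨gen Γ u, gen_mem_special hu⟩ : special Γ S) •
        ((1 : special Γ S) : LinkCoset Γ v S) = (1 : special Γ S) := by
      rw [smul_linkCoset_eq_iff]
      simpa using gen_mem_special (S := S ∩ Γ.neighborSet v) ⟨hu, h.symm⟩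
    have haut := SemidirectProduct.inl_aut (φ := permuteGenerators (special Γ S) (LinkCoset Γ v S))
      ⟨gen Γ u, gen_mem_special hu⟩ (FreeGroup.of ((1 : special Γ S) : LinkCoset Γ v S))
    rw [permuteGenerators_apply, FreeGroup.map.of, hfix, map_inv] at haut
    simp only [semidirectGen, h.ne, hu, if_false, if_true, dif_pos]
    exact mul_inv_eq_iff_eq_mul.mp haut.symm
  · simp [semidirectGen, h.ne, hu]

theorem commute_semidirectGen (v : V) (S : Set V) {u w : V} (h : Γ.Adj u w) :
    Commute (semidirectGen Γ v S u) (semidirectGen Γ v S w) := by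
  rcases eq_or_ne w v with rfl | hw
  · exact commute_semidirectGen_self S h
  rcases eq_or_ne u v with rfl | hu
  · exact (commute_semidirectGen_self S h.symm).symm
  simp only [semidirectGen, hu, hw, if_false]
  split_ifs
  · exact Commute.map (Subtype.ext (commute_gen h).eq) SemidirectProduct.inr
  all_goals simp

/-- The homomorphism from `A(Γ)` to the semidirect product model of `A(S ∪ {v})`; it kills the
generators outside `S ∪ {v}`. -/
noncomputable def toSemidirect (Γ : SimpleGraph V) (v : V) (S : Set V) :
    RAAG Γ →* LinkSemidirect Γ v S :=
  lift (semidirectGen Γ v S) fun _ _ => commute_semidirectGen v S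

/-- The conjugate `p v p⁻¹` as a function of the coset `p A(S ∩ Lk v)`. -/
noncomputable def vertexConj (Γ : SimpleGraph V) (v : V) (S : Set V) (x : LinkCoset Γ v S) :
    RAAG Γ :=
  Quotient.liftOn' x (fun p => (p : RAAG Γ) * gen Γ v * (p : RAAG Γ)⁻¹) <| by
    intro a b hab
    rw [QuotientGroup.leftRel_apply, Subgroup.mem_subgroupOf] at hab
    have hcomm := commute_gen_of_mem_special (v := v) Set.inter_subset_right hab
    have hconj : ((a : RAAG Γ)⁻¹ * b) * gen Γ v * ((a : RAAG Γ)⁻¹ * b)⁻¹ = gen Γ v :=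
      mul_inv_eq_iff_eq_mul.mpr hcomm
    calc (a : RAAG Γ) * gen Γ v * (a : RAAG Γ)⁻¹
        = a * (((a : RAAG Γ)⁻¹ * b) * gen Γ v * ((a : RAAG Γ)⁻¹ * b)⁻¹) * (a : RAAG Γ)⁻¹ := by
          rw [hconj]
      _ = b * gen Γ v * (b : RAAG Γ)⁻¹ := by group

theorem vertexConj_mk (v : V) {S : Set V} (p : special Γ S) :
    vertexConj Γ v S p = (p : RAAG Γ) * gen Γ v * (p : RAAG Γ)⁻¹ := rfl

/-- The homomorphism back from the semidirect product model of `A(S ∪ {v})` to `A(Γ)`. -/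
noncomputable def ofSemidirect (Γ : SimpleGraph V) (v : V) (S : Set V) :
    LinkSemidirect Γ v S →* RAAG Γ :=
  SemidirectProduct.lift (FreeGroup.lift (vertexConj Γ v S)) (special Γ S).subtype <| by
    refine fun h => FreeGroup.ext_hom _ _ fun x => ?_
    induction x using QuotientGroup.induction_on with
    | H p =>
      suffices hconj : vertexConj Γ v S ((h * p : special Γ S) : LinkCoset Γ v S) =
          h * vertexConj Γ v S p * (h : RAAG Γ)⁻¹ by
        simpa [permuteGenerators_apply] using hconj
      simp [vertexConj_mk, mul_assoc]

theorem ofSemidirect_toSemidirect (v : V) (S : Set V) (g : RAAG Γ) :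
    ofSemidirect Γ v S (toSemidirect Γ v S g) = retract Γ (insert v S) g := by
  suffices h : (ofSemidirect Γ v S).comp (toSemidirect Γ v S) = retract Γ (insert v S) from
    DFunLike.congr_fun h g
  refine hom_ext fun u => ?_
  rcases eq_or_ne u v with rfl | hu
  · simp [ofSemidirect, toSemidirect, semidirectGen, vertexConj_mk, retract]
  · by_cases hS : u ∈ S <;> simp [ofSemidirect, toSemidirect, semidirectGen, retract, hu, hS]

variable {v : V} {S : Set V}

theorem coe_right_toSemidirect (hv : v ∉ S) (g : RAAG Γ) :
    ((toSemidirect Γ v S g).right : RAAG Γ) = retract Γ S g := by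
  suffices h : ((special Γ S).subtype.comp SemidirectProduct.rightHom).comp
      (toSemidirect Γ v S) = retract Γ S from DFunLike.congr_fun h g
  refine hom_ext fun u => ?_
  rcases eq_or_ne u v with rfl | hu
  · simp [toSemidirect, semidirectGen, retract, hv]
  · by_cases hS : u ∈ S <;> simp [toSemidirect, semidirectGen, retract, hu, hS]

theorem right_toSemidirect_of_mem_ker (hv : v ∉ S) {g : RAAG Γ} (hg : g ∈ (retract Γ S).ker) :
    (toSemidirect Γ v S g).right = 1 :=
  Subtype.ext ((coe_right_toSemidirect hv g).trans hg)

/-- The coordinate of an element of `ker (A(Γ) → A(S))` in the free factor of the semidirect product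
model of `A(S ∪ {v})`. -/
noncomputable def kerCoord (Γ : SimpleGraph V) (hv : v ∉ S) :
    (retract Γ S).ker →* FreeGroup (LinkCoset Γ v S) where
  toFun g := (toSemidirect Γ v S g).left
  map_one' := by simp
  map_mul' a b := by simp [right_toSemidirect_of_mem_ker hv a.2]

theorem eq_one_of_kerCoord_eq_one (hv : v ∉ S) {g : (retract Γ S).ker}
    (hg : (g : RAAG Γ) ∈ special Γ (insert v S)) (h : kerCoord Γ hv g = 1) : g = 1 := by
  have hone : toSemidirect Γ v S g = 1 :=
    SemidirectProduct.ext h (right_toSemidirect_of_mem_ker hv g.2)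
  rw [← OneMemClass.coe_eq_one, ← retract_of_mem hg, ← ofSemidirect_toSemidirect, hone, map_one]

theorem isFreeGroup_ker_inf_special (hv : v ∉ S) :
    IsFreeGroup ((retract Γ S).ker ⊓ special Γ (insert v S) : Subgroup (RAAG Γ)) := by
  apply isFreeGroup_of_injective
    (φ := (kerCoord Γ hv).comp (Subgroup.inclusion inf_le_left))
  rw [injective_iff_map_eq_one]
  exact fun g hg => Subgroup.inclusion_injective _ (eq_one_of_kerCoord_eq_one hv g.2.2 hg)

theorem isConj_kerCoord_of_commute (hv : v ∉ S) {a : RAAG Γ} {g : (retract Γ S).ker}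
    (h : Commute a g) : IsConj (kerCoord Γ hv g)
      (FreeGroup.map ((toSemidirect Γ v S a).right • ·) (kerCoord Γ hv g)) := by
  have hleft := congrArg SemidirectProduct.left (h.map (toSemidirect Γ v S)).eq
  rw [SemidirectProduct.mul_left, SemidirectProduct.mul_left,
    right_toSemidirect_of_mem_ker hv g.2, map_one, MulAut.one_apply,
    permuteGenerators_apply] at hleft
  refine isConj_iff.2 ⟨(toSemidirect Γ v S a).left⁻¹, ?_⟩
  change (toSemidirect Γ v S a).left⁻¹ * (toSemidirect Γ v S g).left * _⁻¹ = _
  rw [inv_inv, mul_assoc, ← hleft, inv_mul_cancel_left]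
  rfl

theorem exists_conj_pow_mem_link_of_ne_one (hv : v ∉ S) {g : RAAG Γ}
    (hker : retract Γ S g = 1) (hg : g ∈ special Γ (insert v S)) (hg1 : g ≠ 1) :
    ∃ p ∈ special Γ S, ∃ n ≠ 0, ∀ a, Commute a g →
      p⁻¹ * retract Γ S a ^ n * p ∈ special Γ (S ∩ Γ.neighborSet v) := by
  obtain ⟨x, n, hn, hfix⟩ := exists_pow_smul_eq_of_ne_one (H := special Γ S)
    (w := kerCoord Γ hv ⟨g, hker⟩) fun h =>
      hg1 (congrArg Subtype.val (eq_one_of_kerCoord_eq_one hv hg h))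
  obtain ⟨p, rfl⟩ := QuotientGroup.mk_surjective x
  refine ⟨p, p.2, n, hn, fun a ha => ?_⟩
  have h := hfix _ (isConj_kerCoord_of_commute hv (g := ⟨g, hker⟩) ha)
  rwa [smul_linkCoset_eq_iff, SubgroupClass.coe_pow, coe_right_toSemidirect hv] at h

theorem exists_two_conj_pow_mem_link_of_not_commute (hv : v ∉ S) {a b : RAAG Γ}
    (ha : a ∈ (retract Γ S).ker ⊓ special Γ (insert v S))
    (hb : b ∈ (retract Γ S).ker ⊓ special Γ (insert v S)) (hab : ¬Commute a b) :
    ∃ p ∈ special Γ S, ∃ q ∈ special Γ S, p⁻¹ * q ∉ special Γ (S ∩ Γ.neighborSet v) ∧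
      ∃ n ≠ 0, ∀ c, Commute c a → Commute c b →
        p⁻¹ * retract Γ S c ^ n * p ∈ special Γ (S ∩ Γ.neighborSet v) ∧
        q⁻¹ * retract Γ S c ^ n * q ∈ special Γ (S ∩ Γ.neighborSet v) := by
  let a' : (retract Γ S).ker := ⟨a, ha.1⟩
  let b' : (retract Γ S).ker := ⟨b, hb.1⟩
  have hab' : ¬Commute (kerCoord Γ hv a') (kerCoord Γ hv b') := fun h => by
    rw [← commutatorElement_eq_one_iff_commute, ← map_commutatorElement] at h
    have hmem : ⁅a, b⁆ ∈ special Γ (insert v S) :=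
      mul_mem (mul_mem (mul_mem ha.2 hb.2) (inv_mem ha.2)) (inv_mem hb.2)
    exact hab (commutatorElement_eq_one_iff_commute.1
      (congrArg Subtype.val (eq_one_of_kerCoord_eq_one hv hmem h)))
  obtain ⟨x, y, hxy, n, hn, hfix⟩ :=
    exists_two_pow_smul_eq_of_not_commute (H := special Γ S) hab'
  obtain ⟨p, rfl⟩ := QuotientGroup.mk_surjective x
  obtain ⟨q, rfl⟩ := QuotientGroup.mk_surjective y
  refine ⟨p, p.2, q, q.2, fun h => hxy (QuotientGroup.eq.2 h), n, hn, fun c hca hcb => ?_⟩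
  have hc : Commute c ((⁅a', b'⁆ : (retract Γ S).ker) : RAAG Γ) :=
    ((hca.mul_right hcb).mul_right hca.inv_right).mul_right hcb.inv_right
  have h := hfix _ (map_commutatorElement (kerCoord Γ hv) a' b' ▸ isConj_kerCoord_of_commute hv hc)
  simpa only [smul_linkCoset_eq_iff, SubgroupClass.coe_pow, coe_right_toSemidirect hv] using h

end Kernel

/-! ### Ranks of abelian images -/

section Rank

variable {E E' : Type*} [CommGroup E] [CommGroup E'] {G G' : Type*} [Group G] [Group G']

/-- The rank of the image of a homomorphism from an abelian group, as a free abelian group modulo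
torsion; it is encoded as the rank of the quotient by the kernel. -/
noncomputable def imageRank (φ : E →* G) : ℕ :=
  Module.finrank ℤ (Additive (E ⧸ φ.ker))

/-- The homomorphism `e ↦ p⁻¹ φ(e)ⁿ p`. -/
def conjPow (φ : E →* G) (p : G) (n : ℕ) : E →* G :=
  (MulAut.conj p⁻¹).toMonoidHom.comp (φ.comp (powMonoidHom n))

theorem conjPow_apply (φ : E →* G) (p : G) (n : ℕ) (e : E) :
    conjPow φ p n e = p⁻¹ * φ e ^ n * p := by
  simp [conjPow]

theorem imageRank_one : imageRank (1 : E →* G) = 0 := by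
  have : Subsingleton (E ⧸ (1 : E →* G).ker) := by
    rw [MonoidHom.ker_one]
    exact QuotientGroup.subsingleton_quotient_top
  exact Module.finrank_zero_of_subsingleton (R := ℤ) (M := Additive (E ⧸ (1 : E →* G).ker))

theorem finrank_ker_le_of_injective [Module.Finite ℤ (Additive E')] {φ : E →* G} {ψ : E' →* G'}
    (f : E →* E') (hf : Function.Injective f) (hker : ∀ e ∈ φ.ker, f e ∈ ψ.ker) :
    Module.finrank ℤ (Additive φ.ker) ≤ Module.finrank ℤ (Additive ψ.ker) := by
  let g : φ.ker →* ψ.ker := (f.comp φ.ker.subtype).codRestrict ψ.ker fun e => hker e e.2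
  have : IsNoetherian ℤ (Additive E') := inferInstance
  have : Module.Finite ℤ (Additive ψ.ker) :=
    inferInstanceAs (Module.Finite ℤ ψ.ker.toAddSubgroup.toIntSubmodule)
  apply LinearMap.finrank_le_finrank_of_injective (f := (MonoidHom.toAdditive g).toIntLinearMap)
  exact fun x y hxy => Subtype.ext (hf (congrArg Subtype.val hxy))

theorem imageRank_le_one {F : Type*} [Group F] [IsFreeGroup F] (φ : E →* F) :
    imageRank φ ≤ 1 := by
  have hcyclic : IsCyclic φ.range := isCyclic_of_isFreeGroup_of_commute <| by
    rintro ⟨_, a, rfl⟩ ⟨_, b, rfl⟩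
    exact Subtype.ext ((Commute.all a b).map φ)
  have : IsCyclic (E ⧸ φ.ker) :=
    (QuotientGroup.quotientKerEquivRange φ).isCyclic.mpr hcyclic
  obtain ⟨t, ht⟩ := IsCyclic.exists_generator (α := E ⧸ φ.ker)
  exact finrank_le_one (R := ℤ) (M := Additive (E ⧸ φ.ker)) (.ofMul t) ht

variable [Module.Finite ℤ (Additive E)]

theorem imageRank_add_finrank_ker (φ : E →* G) :
    imageRank φ + Module.finrank ℤ (Additive φ.ker) = Module.finrank ℤ (Additive E) :=
  Submodule.finrank_quotient_add_finrank φ.ker.toAddSubgroup.toIntSubmodule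

theorem imageRank_of_injective {φ : E →* G} (hφ : Function.Injective φ) :
    imageRank φ = Module.finrank ℤ (Additive E) := by
  have hker : Subsingleton φ.ker := by
    rw [(MonoidHom.ker_eq_bot_iff φ).2 hφ]
    infer_instance
  have hzero := Module.finrank_zero_of_subsingleton (R := ℤ) (M := Additive φ.ker)
  have := imageRank_add_finrank_ker φ
  omega

theorem imageRank_le_of_ker_le {φ : E →* G} {ψ : E →* G'} (h : ψ.ker ≤ φ.ker) :
    imageRank φ ≤ imageRank ψ := by
  have hker := finrank_ker_le_of_injective (φ := ψ) (ψ := φ) (MonoidHom.id E)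
    Function.injective_id h
  have := imageRank_add_finrank_ker φ
  have := imageRank_add_finrank_ker ψ
  omega

theorem imageRank_le_conjPow [IsMulTorsionFree E] (φ : E →* G) (p : G) {n : ℕ} (hn : n ≠ 0) :
    imageRank φ ≤ imageRank (conjPow φ p n) := by
  have hker := finrank_ker_le_of_injective (φ := conjPow φ p n) (ψ := φ) (powMonoidHom n)
    (pow_left_injective hn) fun e he => by
      rw [MonoidHom.mem_ker, conjPow, MonoidHom.comp_apply] at he
      exact (map_eq_one_iff _ (MulAut.conj p⁻¹).injective).1 he
  have := imageRank_add_finrank_ker φ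
  have := imageRank_add_finrank_ker (conjPow φ p n)
  omega

theorem imageRank_le_imageRank_comp_add_one (φ : E →* G) (π : G →* G') {H : Subgroup G}
    (hφ : ∀ e, φ e ∈ H) [IsFreeGroup (π.ker ⊓ H : Subgroup G)] :
    imageRank φ ≤ imageRank (π.comp φ) + 1 := by
  let η : (π.comp φ).ker →* (π.ker ⊓ H : Subgroup G) :=
    (φ.comp (π.comp φ).ker.subtype).codRestrict _ fun e => ⟨e.2, hφ e⟩
  have : IsNoetherian ℤ (Additive E) := inferInstance
  have : Module.Finite ℤ (Additive (π.comp φ).ker) :=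
    inferInstanceAs (Module.Finite ℤ (π.comp φ).ker.toAddSubgroup.toIntSubmodule)
  have hker : Module.finrank ℤ (Additive η.ker) ≤ Module.finrank ℤ (Additive φ.ker) :=
    finrank_ker_le_of_injective (π.comp φ).ker.subtype Subtype.val_injective
      fun e he => congrArg Subtype.val he
  have := imageRank_le_one η
  have := imageRank_add_finrank_ker η
  have := imageRank_add_finrank_ker φ
  have := imageRank_add_finrank_ker (π.comp φ)
  omega

variable {V : Type} {Γ : SimpleGraph V} [IsMulTorsionFree E]

theorem exists_conjPow_link {v : V} {S : Set V} (hv : v ∉ S) {φ : E →* RAAG Γ}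
    (hφ : ∀ e, φ e ∈ special Γ (insert v S)) (hker : ¬((retract Γ S).comp φ).ker ≤ φ.ker) :
    ∃ p ∈ special Γ S, ∃ n ≠ 0,
      (∀ a, (∀ e, Commute a (φ e)) →
        p⁻¹ * retract Γ S a ^ n * p ∈ special Γ (S ∩ Γ.neighborSet v)) ∧
      imageRank φ ≤ imageRank (conjPow ((retract Γ S).comp φ) p n) + 1 := by
  obtain ⟨e₀, he₀, hne⟩ := SetLike.not_le_iff_exists.mp hker
  obtain ⟨p, hp, n, hn, hlink⟩ := exists_conj_pow_mem_link_of_ne_one hv he₀ (hφ e₀) hne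
  have := isFreeGroup_ker_inf_special (Γ := Γ) hv
  exact ⟨p, hp, n, hn, fun a ha => hlink a (ha e₀),
    (imageRank_le_imageRank_comp_add_one φ (retract Γ S) hφ).trans
      (Nat.add_le_add_right (imageRank_le_conjPow _ p hn) 1)⟩

open Classical in
theorem coe_filter_adj (v : V) (S : Finset V) :
    (S.filter (Γ.Adj v) : Set V) = (S : Set V) ∩ Γ.neighborSet v :=
  Finset.coe_filter _ _

theorem exists_isClique_imageRank_le (S : Finset V) (φ : E →* RAAG Γ)
    (hφ : ∀ e, φ e ∈ special Γ (S : Set V)) :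
    ∃ T ⊆ S, Γ.IsClique T ∧ imageRank φ ≤ T.card := by
  classical
  induction S using Finset.strongInduction generalizing φ with
  | H S ih =>
    rcases S.eq_empty_or_nonempty with rfl | ⟨v, hvS⟩
    · obtain rfl : φ = 1 := MonoidHom.ext fun e => by simpa [special_empty] using hφ e
      exact ⟨∅, subset_rfl, by simp, by simp [imageRank_one]⟩
    obtain ⟨S₀, hv, rfl⟩ : ∃ S₀, v ∉ S₀ ∧ insert v S₀ = S :=
      ⟨S.erase v, S.notMem_erase v, S.insert_erase hvS⟩
    have hS₀ : S₀ ⊂ insert v S₀ := Finset.ssubset_insert hv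
    by_cases hker : ((retract Γ (S₀ : Set V)).comp φ).ker ≤ φ.ker
    · obtain ⟨T, hTS, hT, hrank⟩ := ih S₀ hS₀ ((retract Γ (S₀ : Set V)).comp φ)
        fun e => retract_mem _ (φ e)
      exact ⟨T, hTS.trans hS₀.subset, hT, (imageRank_le_of_ker_le hker).trans hrank⟩
    rw [Finset.coe_insert] at hφ
    obtain ⟨p, -, n, -, hlink, hrank⟩ := exists_conjPow_link hv hφ hker
    obtain ⟨T, hTL, hT, hrankT⟩ := ih (S₀.filter (Γ.Adj v))
      ((S₀.filter_subset _).trans_ssubset hS₀)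
      (conjPow ((retract Γ (S₀ : Set V)).comp φ) p n) fun e => by
        rw [coe_filter_adj, conjPow_apply]
        exact hlink _ fun e' => (Commute.all e e').map φ
    have hTv : ∀ t ∈ T, t ∈ S₀ ∧ Γ.Adj v t := fun t ht => Finset.mem_filter.mp (hTL ht)
    refine ⟨insert v T, Finset.insert_subset_insert v fun t ht => (hTv t ht).1, ?_, ?_⟩
    · rw [Finset.coe_insert, SimpleGraph.isClique_insert]
      exact ⟨hT, fun t ht _ => (hTv t ht).2⟩
    · rw [Finset.card_insert_of_notMem fun h => hv (hTv v h).1]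
      omega

end Rank

/-! ### Ranks of centralizers -/

section Centralizer

variable {V : Type} {Γ : SimpleGraph V}

theorem commute_mul_retract_inv {L : Set V} {g y : RAAG Γ} (hy : y ∈ special Γ L)
    (hconj : g⁻¹ * y * g ∈ special Γ L) : Commute y (g * (retract Γ L g)⁻¹) := by
  have heq : g⁻¹ * y * g = (retract Γ L g)⁻¹ * y * retract Γ L g := by
    rw [← retract_of_mem hconj, map_mul, map_mul, map_inv, retract_of_mem hy]
  calc y * (g * (retract Γ L g)⁻¹)
      = g * (g⁻¹ * y * g) * (retract Γ L g)⁻¹ := by group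
    _ = g * (retract Γ L g)⁻¹ * y := by rw [heq]; group

theorem exists_retract_insert_ne_one {L S : Finset V} (hLS : L ⊆ S) {d : RAAG Γ}
    (hL : retract Γ (L : Set V) d = 1) (hS : retract Γ (S : Set V) d ≠ 1) :
    ∃ u ∈ S, u ∉ L ∧ ∃ S' : Finset V, L ⊆ S' ∧ u ∉ S' ∧ retract Γ (S' : Set V) d = 1 ∧
      retract Γ (insert u (S' : Set V)) d ≠ 1 := by
  classical
  induction S using Finset.strongInduction with
  | H S ih =>
    have hne : L ≠ S := by
      rintro rfl
      exact hS hL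
    obtain ⟨u, huS, huL⟩ := Finset.exists_of_ssubset (hLS.ssubset_of_ne hne)
    have hLu : L ⊆ S.erase u := Finset.subset_erase.2 ⟨hLS, huL⟩
    by_cases hu : retract Γ ((S.erase u : Finset V) : Set V) d = 1
    · refine ⟨u, huS, huL, S.erase u, hLu, S.notMem_erase u, hu, ?_⟩
      rwa [← Finset.coe_insert, Finset.insert_erase huS]
    · obtain ⟨w, hw, h⟩ := ih _ (Finset.erase_ssubset huS) hLu hu
      exact ⟨w, Finset.mem_of_mem_erase hw, h⟩

theorem exists_conj_pow_mem_link_of_retract_eq_one {L S : Finset V} (hLS : L ⊆ S) {d : RAAG Γ}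
    (hL : retract Γ (L : Set V) d = 1) (hS : d ∈ special Γ (S : Set V)) (hd : d ≠ 1) :
    ∃ u ∈ S, u ∉ L ∧ ∃ r : RAAG Γ, ∃ n ≠ 0, ∀ y ∈ special Γ (L : Set V), Commute y d →
      r⁻¹ * y ^ n * r ∈ special Γ ((L : Set V) ∩ Γ.neighborSet u) := by
  obtain ⟨u, huS, huL, S', hLS', huS', hker, hne⟩ :=
    exists_retract_insert_ne_one hLS hL (by rwa [retract_of_mem hS])
  have hLS'' : (L : Set V) ⊆ S' := Finset.coe_subset.2 hLS'
  obtain ⟨r, -, n, hn, hlink⟩ := exists_conj_pow_mem_link_of_ne_one (S := (S' : Set V)) (v := u)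
    (by simpa using huS')
    (by rw [retract_retract, Set.inter_eq_left.2 (Set.subset_insert _ _), hker])
    (retract_mem _ d) hne
  refine ⟨u, huS, huL, retract Γ L r, n, hn, fun y hy hyd => ?_⟩
  have hcomm := hyd.map (retract Γ (insert u (S' : Set V)))
  rw [retract_of_mem (special_mono (hLS''.trans (Set.subset_insert _ _)) hy)] at hcomm
  have hmem := retract_mem_inter (S := (L : Set V)) (hlink y hcomm)
  rw [retract_of_mem (special_mono hLS'' hy), map_mul, map_mul, map_inv, map_pow,
    retract_of_mem hy] at hmem
  exact special_mono (Set.inter_subset_inter_right _ Set.inter_subset_right) hmem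

theorem ker_retract_comp_le_of_commute {v : V} {S : Set V} (hv : v ∉ S) {a b : RAAG Γ}
    (ha : a ∈ (retract Γ S).ker ⊓ special Γ (insert v S))
    (hb : b ∈ (retract Γ S).ker ⊓ special Γ (insert v S)) (hab : ¬Commute a b)
    {E : Type*} [Group E] {β : E →* RAAG Γ} (hβ : ∀ e, β e ∈ special Γ (insert v S))
    (hβa : ∀ e, Commute (β e) a) (hβb : ∀ e, Commute (β e) b) :
    ((retract Γ S).comp β).ker ≤ β.ker := by
  intro e he
  by_contra hne
  let K : Subgroup (RAAG Γ) := (retract Γ S).ker ⊓ special Γ (insert v S)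
  have : IsFreeGroup K := isFreeGroup_ker_inf_special hv
  have hK : Commute (⟨a, ha⟩ : K) ⟨b, hb⟩ :=
    commute_of_commute_of_ne_one (z := (⟨β e, he, hβ e⟩ : K))
      (fun h => hne (congrArg Subtype.val h)) (Subtype.ext (hβa e).symm) (Subtype.ext (hβb e).symm)
  exact hab (hK.map K.subtype)

/-- The vertex set `S` contains the join of a pair of distinct nonadjacent vertices with a clique
of size at least `r`; the group of this join is `F₂ × ℤᵏ` with `r ≤ k`. -/
def HasCliqueSuspension (Γ : SimpleGraph V) (S : Finset V) (r : ℕ) : Prop :=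
  ∃ u ∈ S, ∃ v ∈ S, u ≠ v ∧ ¬Γ.Adj u v ∧ ∃ T ⊆ S, Γ.IsClique T ∧
    (∀ t ∈ T, Γ.Adj u t ∧ Γ.Adj v t) ∧ r ≤ T.card

theorem HasCliqueSuspension.mono {S S' : Finset V} {r r' : ℕ} (h : HasCliqueSuspension Γ S r)
    (hS : S ⊆ S') (hr : r' ≤ r) : HasCliqueSuspension Γ S' r' :=
  have ⟨u, hu, v, hv, hne, hadj, T, hTS, hT, huv, hcard⟩ := h
  ⟨u, hS hu, v, hS hv, hne, hadj, T, hTS.trans hS, hT, huv, hr.trans hcard⟩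

open Classical in
theorem HasCliqueSuspension.insert {v : V} {S : Finset V} {r : ℕ}
    (h : HasCliqueSuspension Γ (S.filter (Γ.Adj v)) r) :
    HasCliqueSuspension Γ (insert v S) (r + 1) := by
  obtain ⟨u, hu, w, hw, hne, hadj, T, hTS, hT, huw, hcard⟩ := h
  have hsub : S.filter (Γ.Adj v) ⊆ Insert.insert v S :=
    (S.filter_subset _).trans (S.subset_insert v)
  have hlink : ∀ t ∈ S.filter (Γ.Adj v), Γ.Adj v t := fun t ht => (Finset.mem_filter.1 ht).2
  refine ⟨u, hsub hu, w, hsub hw, hne, hadj, Insert.insert v T,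
    Finset.insert_subset (S.mem_insert_self v) (hTS.trans hsub), ?_, ?_, ?_⟩
  · rw [Finset.coe_insert, SimpleGraph.isClique_insert]
    exact ⟨hT, fun t ht _ => hlink t (hTS ht)⟩
  · exact Finset.forall_mem_insert .. |>.2 ⟨⟨(hlink u hu).symm, (hlink w hw).symm⟩, huw⟩
  · rw [Finset.card_insert_of_notMem fun hv => (hlink v (hTS hv)).ne rfl]
    omega

variable {E : Type*} [CommGroup E] [Module.Finite ℤ (Additive E)] [IsMulTorsionFree E]

theorem hasCliqueSuspension_of_conj_pow_mem_link {v : V} {S : Finset V} [DecidableEq V]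
    (hv : v ∉ S) (β : E →* RAAG Γ) {p q : RAAG Γ} (hp : p ∈ special Γ (S : Set V))
    (hq : q ∈ special Γ (S : Set V))
    (hpq : p⁻¹ * q ∉ special Γ ((S : Set V) ∩ Γ.neighborSet v)) {n : ℕ} (hn : n ≠ 0)
    (hlink : ∀ e, p⁻¹ * β e ^ n * p ∈ special Γ ((S : Set V) ∩ Γ.neighborSet v) ∧
      q⁻¹ * β e ^ n * q ∈ special Γ ((S : Set V) ∩ Γ.neighborSet v)) :
    HasCliqueSuspension Γ (insert v S) (imageRank β) := by
  classical
  let L := S.filter (Γ.Adj v)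
  have hLS : L ⊆ S := S.filter_subset _
  have hLmem : ∀ {w}, w ∈ L ↔ w ∈ S ∧ Γ.Adj v w := Finset.mem_filter
  rw [← coe_filter_adj] at hpq
  simp only [← coe_filter_adj] at hlink
  let d := p⁻¹ * q * (retract Γ (L : Set V) (p⁻¹ * q))⁻¹
  have hdL : retract Γ (L : Set V) d = 1 := by
    simp only [d, map_mul, map_inv, retract_retract, Set.inter_self, mul_inv_cancel]
  have hdS : d ∈ special Γ (S : Set V) := mul_mem (mul_mem (inv_mem hp) hq)
    (inv_mem (special_mono (Finset.coe_subset.2 hLS) (retract_mem _ _)))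
  have hd : d ≠ 1 := fun h => hpq (mul_inv_eq_one.1 h ▸ retract_mem _ _)
  have hcomm : ∀ e, Commute (conjPow β p n e) d := fun e => by
    rw [conjPow_apply]
    refine commute_mul_retract_inv (hlink e).1 ?_
    convert (hlink e).2 using 1
    group
  obtain ⟨u, huS, huL, r, k, hk, hlink'⟩ :=
    exists_conj_pow_mem_link_of_retract_eq_one hLS hdL hdS hd
  obtain ⟨T, hTL, hT, hrank⟩ := exists_isClique_imageRank_le (L.filter (Γ.Adj u))
    (conjPow (conjPow β p n) r k) fun e => by
      rw [coe_filter_adj, conjPow_apply]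
      exact hlink' _ (conjPow_apply β p n e ▸ (hlink e).1) (hcomm e)
  have hTmem : ∀ t ∈ T, (t ∈ S ∧ Γ.Adj v t) ∧ Γ.Adj u t := fun t ht =>
    (Finset.mem_filter.1 (hTL ht)).imp_left hLmem.1
  refine ⟨u, Finset.mem_insert_of_mem huS, v, S.mem_insert_self v, fun h => hv (h ▸ huS),
    fun h => huL (hLmem.2 ⟨huS, h.symm⟩), T, fun t ht => Finset.mem_insert_of_mem (hTmem t ht).1.1,
    hT, fun t ht => ⟨(hTmem t ht).2, (hTmem t ht).1.2⟩, ?_⟩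
  exact ((imageRank_le_conjPow β p hn).trans (imageRank_le_conjPow _ r hk)).trans hrank

theorem hasCliqueSuspension_of_not_commute [DecidableEq V] {v : V} {S : Finset V} (hv : v ∉ S)
    {a b : RAAG Γ} (ha : a ∈ (retract Γ S).ker ⊓ special Γ (insert v (S : Set V)))
    (hb : b ∈ (retract Γ S).ker ⊓ special Γ (insert v (S : Set V))) (hab : ¬Commute a b)
    {β : E →* RAAG Γ} (hβ : ∀ e, β e ∈ special Γ (insert v (S : Set V)))
    (hβa : ∀ e, Commute (β e) a) (hβb : ∀ e, Commute (β e) b) :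
    HasCliqueSuspension Γ (insert v S) (imageRank β) := by
  have hv' : v ∉ (S : Set V) := hv
  obtain ⟨p, hp, q, hq, hpq, n, hn, hlink⟩ :=
    exists_two_conj_pow_mem_link_of_not_commute hv' ha hb hab
  exact (hasCliqueSuspension_of_conj_pow_mem_link hv ((retract Γ S).comp β) hp hq hpq hn
    fun e => hlink _ (hβa e) (hβb e)).mono subset_rfl
      (imageRank_le_of_ker_le (ker_retract_comp_le_of_commute hv' ha hb hab hβ hβa hβb))

theorem exists_subgroup_conj_mem {F : Type*} [Group F] [IsFreeGroup F] {a b : F}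
    (hab : ¬Commute a b) {G : Type*} [Group G] {α : F →* G} {H : Subgroup G} {p : G} {n : ℕ}
    (hn : n ≠ 0) (hpow : ∀ f, p⁻¹ * α f ^ n * p ∈ H) :
    ∃ F' : Subgroup F, (∀ f ∈ F', p⁻¹ * α f * p ∈ H) ∧ ∃ x y : F', ¬Commute x y := by
  let F' : Subgroup F := H.comap ((MulAut.conj p⁻¹).toMonoidHom.comp α)
  have hF' : ∀ f, f ∈ F' ↔ p⁻¹ * α f * p ∈ H := by simp [F']
  have hpow' : ∀ f, f ^ n ∈ F' := fun f => by
    rw [hF', map_pow]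
    exact hpow f
  exact ⟨F', fun f => (hF' f).1, ⟨a ^ n, hpow' a⟩, ⟨b ^ n, hpow' b⟩,
    fun h => hab (commute_of_commute_pow hn (h.map F'.subtype))⟩

theorem hasCliqueSuspension_of_injective {F : Type*} [Group F] [IsFreeGroup F] {a b : F}
    (hab : ¬Commute a b) (S : Finset V) {α : F →* RAAG Γ} (hα : Function.Injective α)
    {β : E →* RAAG Γ} (hcomm : ∀ f e, Commute (α f) (β e))
    (hαS : ∀ f, α f ∈ special Γ (S : Set V)) (hβS : ∀ e, β e ∈ special Γ (S : Set V)) :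
    HasCliqueSuspension Γ S (imageRank β) := by
  classical
  induction S using Finset.strongInduction generalizing F β with
  | H S ih =>
    rcases S.eq_empty_or_nonempty with rfl | ⟨v, hvS⟩
    · have htriv : ∀ f, α f = 1 := fun f => by simpa [special_empty] using hαS f
      exact absurd (hα ((htriv _).trans (htriv _).symm)) hab
    obtain ⟨S₀, hv, rfl⟩ : ∃ S₀, v ∉ S₀ ∧ insert v S₀ = S :=
      ⟨S.erase v, S.notMem_erase v, S.insert_erase hvS⟩
    have hS₀ : S₀ ⊂ insert v S₀ := Finset.ssubset_insert hv
    rw [Finset.coe_insert] at hαS hβS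
    let π := retract Γ (S₀ : Set V)
    by_cases hker : (π.comp α).ker = ⊥
    swap
    · obtain ⟨x, hx, y, hy, hxy⟩ := exists_not_commute_of_normal _ hker hab
      exact hasCliqueSuspension_of_not_commute hv ⟨hx, hαS x⟩ ⟨hy, hαS y⟩
        (fun h => hxy (Commute.of_map hα h)) hβS
        (fun e => (hcomm x e).symm) fun e => (hcomm y e).symm
    have hπα : Function.Injective (π.comp α) := (MonoidHom.ker_eq_bot_iff _).1 hker
    by_cases hβker : (π.comp β).ker ≤ β.ker
    · exact (ih S₀ hS₀ hab hπα (β := π.comp β) (fun f e => (hcomm f e).map π)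
        (fun f => retract_mem _ _) fun e => retract_mem _ _).mono hS₀.subset
          (imageRank_le_of_ker_le hβker)
    obtain ⟨p, -, n, hn, hlink, hrank⟩ := exists_conjPow_link hv hβS hβker
    obtain ⟨F', hF', x, y, hxy⟩ := exists_subgroup_conj_mem hab (α := π.comp α) hn
      fun f => hlink (α f) (hcomm f)
    have := subgroupIsFreeOfIsFree F'
    let conj : RAAG Γ →* RAAG Γ := (MulAut.conj p⁻¹).toMonoidHom
    refine (HasCliqueSuspension.insert (ih (S₀.filter (Γ.Adj v))
      ((S₀.filter_subset _).trans_ssubset hS₀) hxy (α := (conj.comp (π.comp α)).comp F'.subtype)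
      (β := conjPow (π.comp β) p n)
      (((MulAut.conj p⁻¹).injective.comp hπα).comp Subtype.val_injective)
      (fun f e => ((hcomm f (e ^ n)).map π).map conj) ?_ ?_)).mono subset_rfl hrank
    · intro f
      rw [coe_filter_adj]
      simpa [conj] using hF' f f.2
    · intro e
      rw [coe_filter_adj, conjPow_apply]
      exact hlink _ fun e' => (Commute.all e e').map β

end Centralizer

/-! ### Embeddings -/

section Embeddings

variable {V : Type} {Γ : SimpleGraph V} {ι G : Type*} [Group G]

/-- The homomorphism on `A(Γ)` that sends the generator at `f i` to `x i` and kills the generators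
outside the range of `f`. -/
noncomputable def liftExtend (f : ι ↪ V) (x : ι → G)
    (hx : ∀ i j, Γ.Adj (f i) (f j) → Commute (x i) (x j)) : RAAG Γ →* G :=
  lift (Function.extend f x 1) fun u v huv => by
    by_cases hu : ∃ i, f i = u
    · by_cases hv : ∃ j, f j = v
      · obtain ⟨i, rfl⟩ := hu
        obtain ⟨j, rfl⟩ := hv
        rw [f.injective.extend_apply, f.injective.extend_apply]
        exact hx i j huv
      · rw [Function.extend_apply' _ _ _ hv]
        exact .one_right _
    · rw [Function.extend_apply' _ _ _ hu]
      exact .one_left _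

@[simp] theorem liftExtend_gen (f : ι ↪ V) (x : ι → G)
    (hx : ∀ i j, Γ.Adj (f i) (f j) → Commute (x i) (x j)) (i : ι) :
    liftExtend f x hx (gen Γ (f i)) = x i := by
  rw [liftExtend, lift_gen, f.injective.extend_apply]

theorem exists_injective_of_embedding {W : Type} {Λ : SimpleGraph W} (f : Λ ↪g Γ) :
    ∃ φ : RAAG Λ →* RAAG Γ, Function.Injective φ := by
  let φ : RAAG Λ →* RAAG Γ :=
    lift (fun w => gen Γ (f w)) fun _ _ h => commute_gen (f.map_adj_iff.2 h)
  let ψ : RAAG Γ →* RAAG Λ :=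
    liftExtend f.toEmbedding (gen Λ) fun _ _ h => commute_gen (f.map_adj_iff.1 h)
  have hψφ : ψ.comp φ = MonoidHom.id _ := hom_ext fun w => by
    simpa [φ] using liftExtend_gen f.toEmbedding (gen Λ) _ w
  exact ⟨φ, Function.LeftInverse.injective (DFunLike.congr_fun hψφ)⟩

/-- The homomorphism to `A(Γ)` from the free group on a set of vertices. -/
def freeHom (Γ : SimpleGraph V) (I : Set V) : FreeGroup I →* RAAG Γ :=
  FreeGroup.lift fun v => gen Γ v

theorem freeHom_injective {I : Set V} (hI : Γ.IsIndepSet I) :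
    Function.Injective (freeHom Γ I) := by
  let ψ : RAAG Γ →* FreeGroup I := liftExtend (Function.Embedding.subtype (· ∈ I)) FreeGroup.of
    fun u v h => absurd h (hI u.2 v.2 h.ne)
  have hψ : ψ.comp (freeHom Γ I) = MonoidHom.id _ := FreeGroup.ext_hom _ _ fun v => by
    simpa [freeHom] using liftExtend_gen (Function.Embedding.subtype (· ∈ I)) FreeGroup.of _ v
  exact Function.LeftInverse.injective (DFunLike.congr_fun hψ)

theorem cliqueHom_pairwise {T : Finset V} (hT : Γ.IsClique T) :
    Pairwise fun s t : T => ∀ x y : Multiplicative ℤ,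
      Commute (zpowersHom _ (gen Γ s) x) (zpowersHom _ (gen Γ t) y) :=
  fun s t hst x y => by
    simpa only [zpowersHom_apply] using
      (commute_gen (hT s.2 t.2 (Subtype.coe_ne_coe.2 hst))).zpow_zpow _ _

/-- The homomorphism to `A(Γ)` from the free abelian group on a clique. -/
noncomputable def cliqueHom {T : Finset V} (hT : Γ.IsClique T) :
    (T → Multiplicative ℤ) →* RAAG Γ :=
  MonoidHom.noncommPiCoprod (fun t => zpowersHom _ (gen Γ t)) (cliqueHom_pairwise hT)

theorem cliqueHom_injective {T : Finset V} (hT : Γ.IsClique T) :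
    Function.Injective (cliqueHom hT) := by
  classical
  let x (t : T) : T → Multiplicative ℤ := Pi.mulSingle t (.ofAdd 1)
  let ψ : RAAG Γ →* (T → Multiplicative ℤ) :=
    liftExtend (Function.Embedding.subtype (· ∈ T)) x fun _ _ _ => .all _ _
  have hgen : ∀ t : T, ψ (gen Γ t) = x t :=
    liftExtend_gen (Function.Embedding.subtype (· ∈ T)) x fun _ _ _ => .all _ _
  have hψ : ψ.comp (cliqueHom hT) = MonoidHom.id _ := by
    refine MonoidHom.functions_ext _ _ _ fun t k => ?_
    rw [MonoidHom.comp_apply, cliqueHom, MonoidHom.noncommPiCoprod_mulSingle, zpowersHom_apply,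
      map_zpow, hgen, MonoidHom.id_apply, ← Pi.mulSingle_zpow, ← ofAdd_zsmul, smul_eq_mul, mul_one,
      ofAdd_toAdd]
  exact Function.LeftInverse.injective (DFunLike.congr_fun hψ)

theorem commute_freeHom_cliqueHom {I : Set V} {T : Finset V} (hT : Γ.IsClique T)
    (h : ∀ u ∈ I, ∀ t ∈ T, Γ.Adj u t) (w : FreeGroup I) (e : T → Multiplicative ℤ) :
    Commute (freeHom Γ I w) (cliqueHom hT e) := by
  refine MonoidHom.commute_noncommPiCoprod _ (fun t x => ?_) e
  rw [zpowersHom_apply]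
  refine Commute.zpow_right ?_ _
  have hle : (freeHom Γ I).range ≤ Subgroup.centralizer {gen Γ t} :=
    FreeGroup.range_lift_le <| Set.range_subset_iff.2 fun u =>
      Subgroup.mem_centralizer_singleton_iff.2 (commute_gen (h u u.2 t t.2))
  exact Subgroup.mem_centralizer_singleton_iff.1 (hle ⟨w, rfl⟩)

instance (T : Type*) [Finite T] : Module.Finite ℤ (Additive (T → Multiplicative ℤ)) :=
  inferInstanceAs (Module.Finite ℤ (T → ℤ))

theorem imageRank_comp_cliqueHom {T : Finset V} (hT : Γ.IsClique T) {φ : RAAG Γ →* G}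
    (hφ : Function.Injective φ) : imageRank (φ.comp (cliqueHom hT)) = T.card := by
  rw [imageRank_of_injective (hφ.comp (cliqueHom_injective hT)), ← Fintype.card_coe]
  exact Module.finrank_fintype_fun_eq_card (R := ℤ) (η := T)

variable {W : Type} {Λ : SimpleGraph W}

theorem exists_isClique_card_le_of_injective [Finite V] {φ : RAAG Λ →* RAAG Γ}
    (hφ : Function.Injective φ) {T : Finset W} (hT : Λ.IsClique T) :
    ∃ T' : Finset V, Γ.IsClique T' ∧ T.card ≤ T'.card := by
  have := Fintype.ofFinite V
  obtain ⟨T', -, hT', hcard⟩ := exists_isClique_imageRank_le Finset.univ (φ.comp (cliqueHom hT))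
    fun e => by simp [special_univ]
  exact ⟨T', hT', imageRank_comp_cliqueHom hT hφ ▸ hcard⟩

theorem HasCliqueSuspension.of_injective [Fintype V] {φ : RAAG Λ →* RAAG Γ}
    (hφ : Function.Injective φ) {S : Finset W} {r : ℕ} (h : HasCliqueSuspension Λ S r) :
    HasCliqueSuspension Γ Finset.univ r := by
  obtain ⟨u, -, v, -, hne, hadj, T, -, hT, huvT, hcard⟩ := h
  have hI : Λ.IsIndepSet {u, v} :=
    Set.pairwise_pair.2 fun _ => ⟨hadj, fun h => hadj h.symm⟩
  have hIT : ∀ w ∈ ({u, v} : Set W), ∀ t ∈ T, Λ.Adj w t := by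
    rintro w (rfl | rfl) t ht
    exacts [(huvT t ht).1, (huvT t ht).2]
  have hab : ¬Commute (FreeGroup.of (⟨u, .inl rfl⟩ : ({u, v} : Set W)))
      (FreeGroup.of ⟨v, .inr rfl⟩) := not_commute_freeGroup_of fun h => hne (congrArg Subtype.val h)
  refine (hasCliqueSuspension_of_injective hab Finset.univ (α := φ.comp (freeHom Λ {u, v}))
    (β := φ.comp (cliqueHom hT)) (hφ.comp (freeHom_injective hI))
    (fun w e => (commute_freeHom_cliqueHom hT hIT w e).map φ) ?_ ?_).mono subset_rfl
    (hcard.trans_eq (imageRank_comp_cliqueHom hT hφ).symm)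
  all_goals simp [special_univ]

end Embeddings

end RAAG

/-! ### Paths and cycles -/

section Graphs

theorem disjoint_image_of_isIndepSet {V : Type*} [DecidableEq V] {G : SimpleGraph V} {s : V → V}
    (hs : ∀ v, G.Adj v (s v)) {T : Finset V} (hT : G.IsIndepSet T) :
    Disjoint T (T.image s) := by
  refine Finset.disjoint_left.2 fun w hw hw' => ?_
  obtain ⟨v, hv, rfl⟩ := Finset.mem_image.1 hw'
  exact hT hv hw (hs v).ne (hs v)

theorem two_mul_card_le_of_isIndepSet {V : Type*} [Fintype V] {G : SimpleGraph V} {s : V → V}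
    (hinj : Function.Injective s) (hs : ∀ v, G.Adj v (s v)) {T : Finset V}
    (hT : G.IsIndepSet T) : 2 * T.card ≤ Fintype.card V := by
  classical
  calc 2 * T.card = (T ∪ T.image s).card := by
        rw [Finset.card_union_of_disjoint (disjoint_image_of_isIndepSet hs hT),
          Finset.card_image_of_injective _ hinj, two_mul]
    _ ≤ Fintype.card V := Finset.card_le_univ _

theorem two_mul_card_add_three_le_of_isIndepSet {V : Type*} [Fintype V] {G : SimpleGraph V}
    {s : V → V} (hinj : Function.Injective s) (hs : ∀ v, G.Adj v (s v))
    (hss : ∀ v, s (s v) ≠ v) {T : Finset V} (hT : G.IsIndepSet T) {u : V}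
    (hu : ∀ t ∈ T, Gᶜ.Adj u t) (hsu : ∀ t ∈ T, Gᶜ.Adj (s u) t) :
    2 * T.card + 3 ≤ Fintype.card V := by
  classical
  have huT : u ∉ T := fun h => (hu u h).ne rfl
  have hT' : G.IsIndepSet (insert u T : Finset V) := by
    rw [← SimpleGraph.isClique_compl, Finset.coe_insert, SimpleGraph.isClique_insert,
      SimpleGraph.isClique_compl]
    exact ⟨hT, fun t ht _ => hu t ht⟩
  have hnot : s (s u) ∉ insert u T ∪ (insert u T).image s := by
    simp only [Finset.mem_union, Finset.mem_insert, Finset.mem_image, not_or]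
    refine ⟨⟨hss u, fun h => ((SimpleGraph.compl_adj ..).1 (hsu _ h)).2 (hs _)⟩, ?_⟩
    rintro ⟨v, rfl | hv, hvu⟩
    · exact (hs v).ne (hinj hvu)
    · exact (hsu v hv).ne (hinj hvu).symm
  have hcard := Finset.card_le_univ (insert (s (s u)) (insert u T ∪ (insert u T).image s))
  rw [Finset.card_insert_of_notMem hnot,
    Finset.card_union_of_disjoint (disjoint_image_of_isIndepSet hs hT'),
    Finset.card_image_of_injective _ hinj, Finset.card_insert_of_notMem huT] at hcard
  omega

variable {m n k : ℕ}

theorem cycleGraph_adj_add_one (v : Fin (n + 2)) : (cycleGraph (n + 2)).Adj v (v + 1) := by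
  simp [cycleGraph_adj]

theorem two_mul_card_le_of_isClique_compl_cycleGraph {T : Finset (Fin (n + 2))}
    (hT : (cycleGraph (n + 2))ᶜ.IsClique T) : 2 * T.card ≤ n + 2 := by
  simpa using two_mul_card_le_of_isIndepSet (add_left_injective 1) cycleGraph_adj_add_one
    ((SimpleGraph.isClique_compl _).1 hT)

theorem two_mul_add_three_le_of_hasCliqueSuspension_compl_cycleGraph
    {S : Finset (Fin (n + 3))} (h : RAAG.HasCliqueSuspension (cycleGraph (n + 3))ᶜ S k) :
    2 * k + 3 ≤ n + 3 := by
  obtain ⟨u, -, v, -, hne, hadj, T, -, hT, huvT, hcard⟩ := h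
  have hss : ∀ w : Fin (n + 3), w + 1 + 1 ≠ w := fun w => by
    simp [add_assoc, Fin.ext_iff, Fin.val_add, Nat.mod_eq_of_lt (show 2 < n + 3 by omega)]
  have hbound : ∀ w, (∀ t ∈ T, (cycleGraph (n + 3))ᶜ.Adj w t ∧
      (cycleGraph (n + 3))ᶜ.Adj (w + 1) t) → 2 * T.card + 3 ≤ n + 3 := fun w hw => by
    simpa using two_mul_card_add_three_le_of_isIndepSet (add_left_injective 1)
      cycleGraph_adj_add_one hss ((SimpleGraph.isClique_compl _).1 hT)
      (fun t ht => (hw t ht).1) fun t ht => (hw t ht).2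
  have huv : (cycleGraph (n + 3)).Adj u v := by
    by_contra h
    exact hadj ((SimpleGraph.compl_adj ..).2 ⟨hne, h⟩)
  rcases cycleGraph_adj.1 huv with h | h
  · obtain rfl := sub_eq_iff_eq_add'.1 h
    have := hbound v fun t ht => (huvT t ht).symm
    omega
  · obtain rfl := sub_eq_iff_eq_add'.1 h
    have := hbound u huvT
    omega

theorem compl_pathGraph_adj {i j : Fin m} (h : (i : ℕ) + 2 ≤ j) : (pathGraph m)ᶜ.Adj i j := by
  rw [SimpleGraph.compl_adj, pathGraph_adj, Ne, Fin.ext_iff]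
  omega

theorem exists_isClique_compl_pathGraph {a : ℕ} (h : a + 2 * k ≤ m + 1) :
    ∃ T : Finset (Fin m), (pathGraph m)ᶜ.IsClique T ∧ T.card = k ∧ ∀ t ∈ T, a ≤ (t : ℕ) := by
  let f : Fin k → Fin m := fun i => ⟨a + 2 * i, by omega⟩
  have hf : Function.Injective f := fun i j hij => by simpa [f, Fin.ext_iff] using hij
  refine ⟨Finset.univ.map ⟨f, hf⟩, ?_, by simp, by simp [f]⟩
  simp only [Finset.coe_map, Finset.coe_univ, Set.image_univ, Function.Embedding.coeFn_mk]
  rintro _ ⟨i, rfl⟩ _ ⟨j, rfl⟩ hij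
  rcases lt_trichotomy i j with h | rfl | h
  · exact compl_pathGraph_adj (by simp only [f]; omega)
  · exact absurd rfl hij
  · exact (compl_pathGraph_adj (by simp only [f]; omega)).symm

theorem hasCliqueSuspension_compl_pathGraph (h : 2 * k + 2 ≤ m) :
    RAAG.HasCliqueSuspension (pathGraph m)ᶜ Finset.univ k := by
  obtain ⟨T, hT, hcard, hle⟩ :=
    exists_isClique_compl_pathGraph (m := m) (k := k) (a := 3) (by omega)
  let u : Fin m := ⟨0, by omega⟩
  let v : Fin m := ⟨1, by omega⟩
  refine ⟨u, Finset.mem_univ u, v, Finset.mem_univ v, by simp [u, v], ?_, T, T.subset_univ, hT,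
    fun t ht => ?_, hcard.ge⟩
  · simp [u, v, pathGraph_adj]
  · have := hle t ht
    constructor <;> apply compl_pathGraph_adj <;> simp only [u, v] <;> omega

theorem lt_of_injective_pathGraph_cycleGraph (hn : 3 ≤ n)
    {φ : GG (pathGraph m) →* GG (cycleGraph n)} (hφ : Function.Injective φ) : m < n := by
  obtain ⟨n, rfl⟩ := Nat.exists_eq_add_of_le' hn
  by_contra! hnm
  rcases Nat.even_or_odd' (n + 3) with ⟨k, hk | hk⟩
  · have hpath := hasCliqueSuspension_compl_pathGraph (m := m) (k := k - 1) (by omega)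
    have :=
      two_mul_add_three_le_of_hasCliqueSuspension_compl_cycleGraph (hpath.of_injective hφ)
    omega
  · obtain ⟨T, hT, hcard, -⟩ :=
      exists_isClique_compl_pathGraph (m := m) (k := k + 1) (a := 0) (by omega)
    obtain ⟨T', hT', hle⟩ := RAAG.exists_isClique_card_le_of_injective hφ hT
    have := two_mul_card_le_of_isClique_compl_cycleGraph hT'
    omega

theorem cycleGraph_castLE_adj_iff (h : m + 1 ≤ n) {i j : Fin m} :
    (cycleGraph n).Adj (i.castLE (by omega)) (j.castLE (by omega)) ↔ (pathGraph m).Adj i j := by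
  have hsub : ∀ a b : Fin n, (b : ℕ) < m → ((a - b).val = 1 ↔ (b : ℕ) + 1 = a) := by
    intro a b hb
    rcases le_or_gt b a with hba | hab
    · rw [Fin.sub_val_of_le hba]
      omega
    · rw [Fin.coe_sub_iff_lt.2 hab]
      omega
  rw [cycleGraph_adj', hsub _ _ (by simp), hsub _ _ (by simp), pathGraph_adj, or_comm]
  rfl

/-- A path as an induced subgraph of a longer cycle. -/
def pathGraphEmbedding (h : m + 1 ≤ n) : pathGraph m ↪g cycleGraph n where
  toFun := Fin.castLE (by omega)
  inj' := Fin.castLE_injective _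
  map_rel_iff' := cycleGraph_castLE_adj_iff h

end Graphs

/-- `G(P_m) ↪ G(C_n)` iff `m + 1 ≤ n`, for `m ≥ 1`, `n ≥ 3`. -/
theorem statement5 (m n : ℕ) (hm : 0 < m) (hn : 3 ≤ n) :
    (∃ φ : GG (pathGraph m) →* GG (cycleGraph n), Function.Injective φ) ↔ m + 1 ≤ n := by
  constructor
  · rintro ⟨φ, hφ⟩
    exact lt_of_injective_pathGraph_cycleGraph hn hφ
  · intro h
    exact RAAG.exists_injective_of_embedding (Embedding.complEquiv (pathGraphEmbedding h))
end

section
/- For every finite simple graph Λ, there exists a finite simple graph T such that T is a tree, every vertex of T has degree at most 3, and there is an injective group homomorphism from G(Λ) into G(T). -/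
open SimpleGraph

/-!
For sets of vertices `S` of `Γ` and `R` of `T`, say that `(Γ, S)` embeds in `(T, R)` if there is an
injective homomorphism `G(Γ) → G(T)` under which the preimage of the subgroup generated by the
vertices outside `R` is the subgroup generated by the vertices outside `S`. By induction on the
number of vertices, every `(Γ, S)` embeds in some `(T, {r})`, where `T` is a finite tree of maximum
degree at most `3` and `r` is a vertex of degree at most `2`.

* Adding to `Γ` a vertex `v` adjacent exactly to `S` is an HNN extension of `G(Γ)` whose stable
  letter centralises the subgroup generated by the complement of `S`. By Britton's lemma an
  embedding of `(Γ, S)` in `(T, {r})` therefore extends to one of `(Γ ∪ v, {v})` in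
  `(T ∪ r', {r'})`, where the new root `r'` is adjacent to `r` only.
* Embeddings of `(Γ, S₁)` in `(T₁, {r₁})` and of `(Γ, S₂)` in `(T₂, {r₂})` combine to a diagonal map
  `G(Γ) → G(T₁) × G(T₂) = G(T₁ ⊔ T₂)`, which embeds `(Γ, S₁ ∪ S₂)` in `(T₁ ⊔ T₂, {r₁, r₂})`. Join
  `r₁` and `r₂` to a new root and conjugate by its generator `t`: by Britton's lemma `t g t⁻¹` lies
  in `G(T₁ ⊔ T₂)` only if `g` centralises `t`, so `{r₁, r₂}` is traded for the single new root.
* Singletons reduce to the first step, since any vertex can be regarded as the last one added.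
-/

namespace GG

variable {V W X : Type} {Γ : SimpleGraph V} {Δ : SimpleGraph W} {Θ : SimpleGraph X}

section Presentation

variable {H : Type*} [Group H]

/-- The generator of `G(Γ)` attached to a vertex. -/
def gen (Γ : SimpleGraph V) (v : V) : GG Γ := PresentedGroup.of v

theorem gen_commute_gen {u v : V} (h : ¬ Γ.Adj u v) : Commute (gen Γ u) (gen Γ v) := by
  obtain rfl | huv := eq_or_ne u v
  · exact Commute.refl _
  · have hrel : FreeGroup.of u * FreeGroup.of v * (FreeGroup.of u)⁻¹ * (FreeGroup.of v)⁻¹ ∈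
        raagRels Γᶜ := ⟨u, v, (Γ.compl_adj u v).mpr ⟨huv, h⟩, rfl⟩
    exact mul_inv_eq_iff_eq_mul.mp (mul_inv_eq_one.mp (PresentedGroup.one_of_mem hrel))

/-- The homomorphism out of `G(Γ)` determined by its values on the generators, provided the values
at distinct non-adjacent vertices commute. -/
def lift (f : V → H) (hf : ∀ u v, u ≠ v → ¬ Γ.Adj u v → Commute (f u) (f v)) : GG Γ →* H :=
  PresentedGroup.toGroup (f := f) <| by
    rintro _ ⟨u, v, huv, rfl⟩
    obtain ⟨hne, hadj⟩ := (Γ.compl_adj u v).mp huv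
    simp only [map_mul, map_inv, FreeGroup.lift_apply_of]
    rw [(hf u v hne hadj).eq, mul_inv_cancel_right, mul_inv_cancel]

@[simp]
theorem lift_gen (f : V → H) (hf : ∀ u v, u ≠ v → ¬ Γ.Adj u v → Commute (f u) (f v)) (v : V) :
    lift f hf (gen Γ v) = f v :=
  PresentedGroup.toGroup.of _

theorem hom_ext {f g : GG Γ →* H} (h : ∀ v, f (gen Γ v) = g (gen Γ v)) : f = g :=
  PresentedGroup.ext h

theorem subsingleton [IsEmpty V] : Subsingleton (GG Γ) :=
  (PresentedGroup.mk_surjective _).subsingleton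

end Presentation

section Parabolic

/-- The standard parabolic subgroup of `G(Γ)` generated by the vertices in `A`. -/
def parabolic (Γ : SimpleGraph V) (A : Set V) : Subgroup (GG Γ) :=
  Subgroup.closure (gen Γ '' A)

theorem gen_mem_parabolic {A : Set V} {v : V} (hv : v ∈ A) : gen Γ v ∈ parabolic Γ A :=
  Subgroup.subset_closure (Set.mem_image_of_mem _ hv)

theorem parabolic_le_iff {A : Set V} {K : Subgroup (GG Γ)} :
    parabolic Γ A ≤ K ↔ ∀ v ∈ A, gen Γ v ∈ K := by
  rw [parabolic, Subgroup.closure_le, Set.image_subset_iff]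
  rfl

theorem parabolic_univ : parabolic Γ Set.univ = ⊤ := by
  rw [parabolic, Set.image_univ]
  exact PresentedGroup.closure_range_of _

theorem parabolic_mono {A B : Set V} (h : A ⊆ B) : parabolic Γ A ≤ parabolic Γ B :=
  Subgroup.closure_mono (Set.image_mono h)

theorem commute_of_mem_parabolic {A B : Set V} (hAB : ∀ a ∈ A, ∀ b ∈ B, ¬ Γ.Adj a b) {g h : GG Γ}
    (hg : g ∈ parabolic Γ A) (hh : h ∈ parabolic Γ B) : Commute g h := by
  have gen_commute : ∀ a ∈ A, Commute (gen Γ a) h := fun a ha ↦ by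
    have hle : parabolic Γ B ≤ Subgroup.centralizer {gen Γ a} := parabolic_le_iff.mpr fun b hb ↦
      Subgroup.mem_centralizer_singleton_iff.mpr (gen_commute_gen (hAB a ha b hb)).symm
    exact (Subgroup.mem_centralizer_singleton_iff.mp (hle hh)).symm
  have hle : parabolic Γ A ≤ Subgroup.centralizer {h} := parabolic_le_iff.mpr fun a ha ↦
    Subgroup.mem_centralizer_singleton_iff.mpr (gen_commute a ha)
  exact Subgroup.mem_centralizer_singleton_iff.mp (hle hg)

end Parabolic

section Embedding

/-- The homomorphism `G(Γ) → G(Δ)` induced by an embedding of `Γ` as an induced subgraph of `Δ`. -/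
def map (f : Γ ↪g Δ) : GG Γ →* GG Δ :=
  lift (fun v ↦ gen Δ (f v)) fun _ _ _ h ↦ gen_commute_gen (by rwa [f.map_adj_iff])

@[simp]
theorem map_gen (f : Γ ↪g Δ) (v : V) : map f (gen Γ v) = gen Δ (f v) :=
  lift_gen ..

/-- The retraction `G(Δ) → G(Γ)` of `GG.map f`, which kills the generators outside the range
of `f`. -/
noncomputable def retract (f : Γ ↪g Δ) : GG Δ →* GG Γ :=
  lift (Function.extend f (gen Γ) 1) fun u v _ h ↦ by
    by_cases hu : ∃ u', f u' = u
    · by_cases hv : ∃ v', f v' = v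
      · obtain ⟨⟨u', rfl⟩, v', rfl⟩ := hu, hv
        simp only [f.injective.extend_apply]
        exact gen_commute_gen (by rwa [← f.map_adj_iff])
      · rw [Function.extend_apply' _ _ _ hv]
        exact Commute.one_right _
    · rw [Function.extend_apply' _ _ _ hu]
      exact Commute.one_left _

@[simp]
theorem retract_gen_apply (f : Γ ↪g Δ) (v : V) : retract f (gen Δ (f v)) = gen Γ v :=
  (lift_gen ..).trans (f.injective.extend_apply ..)

theorem retract_gen_of_notMem_range (f : Γ ↪g Δ) {w : W} (hw : w ∉ Set.range f) :
    retract f (gen Δ w) = 1 :=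
  (lift_gen ..).trans (Function.extend_apply' _ _ _ hw)

@[simp]
theorem retract_map (f : Γ ↪g Δ) (g : GG Γ) : retract f (map f g) = g :=
  DFunLike.congr_fun (hom_ext (f := (retract f).comp (map f)) (g := .id _) (by simp)) g

theorem retract_map_of_disjoint (f : Γ ↪g Θ) (f' : Δ ↪g Θ)
    (h : Disjoint (Set.range f) (Set.range f')) (g : GG Δ) : retract f (map f' g) = 1 := by
  have hcomp : (retract f).comp (map f') = 1 := hom_ext fun w ↦ by
    rw [MonoidHom.comp_apply, map_gen, MonoidHom.one_apply]
    exact retract_gen_of_notMem_range f (h.notMem_of_mem_right ⟨w, rfl⟩)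
  exact DFunLike.congr_fun hcomp g

theorem map_injective (f : Γ ↪g Δ) : Function.Injective (map f) :=
  Function.LeftInverse.injective (retract_map f)

theorem parabolic_le_comap_retract (f : Γ ↪g Δ) (A : Set W) :
    parabolic Δ A ≤ (parabolic Γ (f ⁻¹' A)).comap (retract f) := by
  refine parabolic_le_iff.mpr fun w hw ↦ ?_
  rw [Subgroup.mem_comap]
  by_cases hwf : w ∈ Set.range f
  · obtain ⟨v, rfl⟩ := hwf
    rw [retract_gen_apply]
    exact gen_mem_parabolic hw
  · rw [retract_gen_of_notMem_range f hwf]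
    exact one_mem _

theorem map_parabolic (f : Γ ↪g Δ) (A : Set V) :
    (parabolic Γ A).map (map f) = parabolic Δ (f '' A) := by
  simp only [parabolic, MonoidHom.map_closure, Set.image_image, map_gen]

theorem map_mem_parabolic_image (f : Γ ↪g Δ) {A : Set V} {g : GG Γ} (hg : g ∈ parabolic Γ A) :
    map f g ∈ parabolic Δ (f '' A) :=
  (map_parabolic f A).le (Subgroup.mem_map_of_mem _ hg)

theorem range_map (f : Γ ↪g Δ) : (map f).range = parabolic Δ (Set.range f) := by
  rw [MonoidHom.range_eq_map, ← parabolic_univ, map_parabolic, Set.image_univ]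

theorem map_mem_parabolic_range (f : Γ ↪g Δ) (g : GG Γ) : map f g ∈ parabolic Δ (Set.range f) :=
  (range_map f).le (Set.mem_range_self g)

theorem comap_map_parabolic (f : Γ ↪g Δ) (A : Set W) :
    (parabolic Δ A).comap (map f) = parabolic Γ (f ⁻¹' A) := by
  refine le_antisymm (fun g hg ↦ ?_) (parabolic_le_iff.mpr fun v hv ↦ ?_)
  · simpa only [Subgroup.mem_comap, retract_map] using parabolic_le_comap_retract f A hg
  · rw [Subgroup.mem_comap, map_gen]
    exact gen_mem_parabolic hv

theorem parabolic_inf_parabolic (A B : Set V) :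
    parabolic Γ A ⊓ parabolic Γ B = parabolic Γ (A ∩ B) := by
  refine le_antisymm ?_ (le_inf (parabolic_mono Set.inter_subset_left)
    (parabolic_mono Set.inter_subset_right))
  let ι : Γ.induce A ↪g Γ := Embedding.induce A
  have range_ι : Set.range ι = A := Subtype.range_coe
  rintro g ⟨hA, hB⟩
  rw [SetLike.mem_coe, ← range_ι, ← range_map] at hA
  obtain ⟨k, rfl⟩ := hA
  have hk : k ∈ parabolic (Γ.induce A) (ι ⁻¹' B) := by rwa [← comap_map_parabolic]
  have image_preimage_ι : ι '' (ι ⁻¹' B) = A ∩ B := Subtype.image_preimage_coe A B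
  rw [← image_preimage_ι]
  exact map_mem_parabolic_image ι hk

end Embedding

section Sum

/-- The homomorphism `G(Γ) × G(Δ) → G(Γ ⊔ Δ)`. -/
def prodToSum (Γ : SimpleGraph V) (Δ : SimpleGraph W) : GG Γ × GG Δ →* GG (Γ ⊕g Δ) :=
  (map Embedding.sumInl).noncommCoprod (map Embedding.sumInr) fun g h ↦ by
    refine commute_of_mem_parabolic ?_ (map_mem_parabolic_range _ g) (map_mem_parabolic_range _ h)
    rintro _ ⟨v, rfl⟩ _ ⟨w, rfl⟩
    exact not_adj_sum_inl_inr v w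

theorem prodToSum_apply (p : GG Γ × GG Δ) :
    prodToSum Γ Δ p = map Embedding.sumInl p.1 * map Embedding.sumInr p.2 :=
  MonoidHom.noncommCoprod_apply ..

theorem disjoint_range_sumInl_sumInr :
    Disjoint (Set.range (Embedding.sumInl : Γ ↪g Γ ⊕g Δ))
      (Set.range (Embedding.sumInr : Δ ↪g Γ ⊕g Δ)) :=
  Set.isCompl_range_inl_range_inr.disjoint

@[simp]
theorem retract_sumInl_prodToSum (p : GG Γ × GG Δ) :
    retract Embedding.sumInl (prodToSum Γ Δ p) = p.1 := by
  rw [prodToSum_apply, map_mul, retract_map,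
    retract_map_of_disjoint _ _ disjoint_range_sumInl_sumInr, mul_one]

@[simp]
theorem retract_sumInr_prodToSum (p : GG Γ × GG Δ) :
    retract Embedding.sumInr (prodToSum Γ Δ p) = p.2 := by
  rw [prodToSum_apply, map_mul, retract_map,
    retract_map_of_disjoint _ _ disjoint_range_sumInl_sumInr.symm, one_mul]

theorem prodToSum_injective : Function.Injective (prodToSum Γ Δ) :=
  Function.LeftInverse.injective (g := fun g ↦
    (retract Embedding.sumInl g, retract Embedding.sumInr g)) fun p ↦ by simp

theorem comap_prodToSum_parabolic (A : Set (V ⊕ W)) :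
    (parabolic (Γ ⊕g Δ) A).comap (prodToSum Γ Δ) =
      (parabolic Γ (Sum.inl ⁻¹' A)).prod (parabolic Δ (Sum.inr ⁻¹' A)) := by
  refine le_antisymm (fun p hp ↦ ?_) ?_
  · have hp₁ := parabolic_le_comap_retract Embedding.sumInl A hp
    have hp₂ := parabolic_le_comap_retract Embedding.sumInr A hp
    rw [Subgroup.mem_comap, retract_sumInl_prodToSum] at hp₁
    rw [Subgroup.mem_comap, retract_sumInr_prodToSum] at hp₂
    exact ⟨hp₁, hp₂⟩
  · rintro p ⟨hp₁, hp₂⟩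
    rw [Subgroup.mem_comap, prodToSum_apply]
    exact mul_mem ((comap_map_parabolic Embedding.sumInl A).ge hp₁)
      ((comap_map_parabolic Embedding.sumInr A).ge hp₂)

end Sum

end GG

section HNN

open HNNExtension HNNExtension.NormalWord

variable {G G' : Type*} [Group G] [Group G'] {A B : Subgroup G} {A' B' : Subgroup G'}
  {φ : A ≃* B} {φ' : A' ≃* B'}

theorem exists_reducedWord_prod_eq (x : HNNExtension G A B φ) :
    ∃ w : ReducedWord G A B, w.prod φ = x := by
  obtain ⟨d⟩ := TransversalPair.nonempty G A B
  refine ⟨(x • (NormalWord.empty : NormalWord d)).toReducedWord, ?_⟩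
  rw [prod_smul, prod_empty, mul_one]

theorem conj_t_mem_range_of_iff {g : G} :
    (t * of g * t⁻¹ : HNNExtension G A B φ) ∈ (of : G →* HNNExtension G A B φ).range ↔ g ∈ A := by
  refine ⟨fun h ↦ by_contra fun hg ↦ ?_, fun hg ↦ ⟨φ ⟨g, hg⟩, equiv_eq_conj ⟨g, hg⟩⟩⟩
  -- For `g ∉ A` the word `t g t⁻¹` is reduced, so Britton's lemma applies to it.
  let w : ReducedWord G A B :=
    { head := 1
      toList := [(1, g), (-1, 1)]
      chain := List.isChain_pair.mpr fun h ↦ absurd h hg }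
  have prod_w : w.prod φ = t * of g * t⁻¹ := by simp [ReducedWord.prod, w]
  exact List.cons_ne_nil _ _ (ReducedWord.toList_eq_nil_of_mem_of_range φ w (prod_w ▸ h))

/-- The homomorphism of HNN extensions induced by a homomorphism of the base groups that is
compatible with the two identifications of associated subgroups; it sends the stable letter to the
stable letter. -/
def hnnMap (f : G →* G') (hf : ∀ a : A, ∃ a' : A', (a' : G') = f a ∧ (φ' a' : G') = f (φ a)) :
    HNNExtension G A B φ →* HNNExtension G' A' B' φ' :=
  HNNExtension.lift (of.comp f) t fun a ↦ by
    obtain ⟨a', ha', hφ'⟩ := hf a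
    simp only [MonoidHom.comp_apply, ← ha', ← hφ', t_mul_of]

section Map

variable {f : G →* G'} {hf : ∀ a : A, ∃ a' : A', (a' : G') = f a ∧ (φ' a' : G') = f (φ a)}

@[simp]
theorem hnnMap_of (g : G) : hnnMap f hf (of g) = of (f g) :=
  lift_of ..

@[simp]
theorem hnnMap_t : hnnMap f hf t = t :=
  lift_t ..

theorem exists_reducedWord_prod_eq_hnnMap (hA : A'.comap f ≤ A) (hB : B'.comap f ≤ B)
    (w : ReducedWord G A B) :
    ∃ w' : ReducedWord G' A' B', w'.prod φ' = hnnMap f hf (w.prod φ) ∧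
      w'.toList = w.toList.map (Prod.map id f) := by
  refine ⟨⟨f w.head, w.toList.map (Prod.map id f), ?_⟩, ?_, rfl⟩
  · refine (List.isChain_map _).mpr (w.chain.imp fun p q hpq hp ↦ hpq ?_)
    obtain ⟨u, g⟩ := p
    obtain rfl | rfl := Int.units_eq_one_or u
    · exact hA hp
    · exact hB hp
  · simp [ReducedWord.prod, Function.comp_def, map_list_prod]

theorem comap_hnnMap_range_of (hA : A'.comap f ≤ A) (hB : B'.comap f ≤ B) :
    (of : G' →* HNNExtension G' A' B' φ').range.comap (hnnMap f hf) =
      (of : G →* HNNExtension G A B φ).range := by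
  refine le_antisymm (fun x hx ↦ ?_) ?_
  · obtain ⟨w, rfl⟩ := exists_reducedWord_prod_eq x
    obtain ⟨w', hw', hlist⟩ := exists_reducedWord_prod_eq_hnnMap (hf := hf) hA hB w
    have hnil : w.toList = [] := by
      rw [← List.map_eq_nil_iff, ← hlist]
      exact ReducedWord.toList_eq_nil_of_mem_of_range φ' w' (hw' ▸ hx)
    exact ⟨w.head, by simp [ReducedWord.prod, hnil]⟩
  · rintro _ ⟨g, rfl⟩
    exact ⟨f g, (hnnMap_of g).symm⟩

theorem hnnMap_injective (hf_inj : Function.Injective f) (hA : A'.comap f ≤ A)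
    (hB : B'.comap f ≤ B) : Function.Injective (hnnMap f hf) := by
  refine (injective_iff_map_eq_one _).mpr fun x hx ↦ ?_
  have hx_base : x ∈ (of : G →* HNNExtension G A B φ).range := by
    rw [← comap_hnnMap_range_of (hf := hf) hA hB, Subgroup.mem_comap, hx]
    exact one_mem _
  obtain ⟨g, rfl⟩ := hx_base
  rw [hnnMap_of] at hx
  rw [(map_eq_one_iff f hf_inj).mp ((map_eq_one_iff _ (of_injective φ')).mp hx), map_one]

end Map

end HNN

/-- The graph obtained from `Γ` by adding a vertex `none` whose neighbours are the vertices
in `S`. -/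
def addVertex {V : Type} (Γ : SimpleGraph V) (S : Set V) : SimpleGraph (Option V) where
  Adj
    | some u, some v => Γ.Adj u v
    | some v, none | none, some v => v ∈ S
    | none, none => False
  symm := ⟨by rintro (_ | u) (_ | v) h <;> first | exact h | exact Γ.adj_symm h⟩
  loopless := ⟨by rintro (_ | v) h <;> first | exact h | exact Γ.irrefl h⟩

namespace addVertex

variable {V : Type} {Γ : SimpleGraph V} {S : Set V} {u v : V}

@[simp]
theorem adj_some_some : (addVertex Γ S).Adj (some u) (some v) ↔ Γ.Adj u v := Iff.rfl

@[simp]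
theorem adj_none_some : (addVertex Γ S).Adj none (some v) ↔ v ∈ S := Iff.rfl

@[simp]
theorem adj_some_none : (addVertex Γ S).Adj (some v) none ↔ v ∈ S := Iff.rfl

theorem comap_some_eq (Δ : SimpleGraph (Option V)) :
    addVertex (Δ.comap some) {v | Δ.Adj none (some v)} = Δ := by
  ext (_ | u) (_ | v) <;> simp [Δ.adj_comm (some _) none]

/-- The inclusion of `Γ` in the graph with one more vertex. -/
def someEmbedding (Γ : SimpleGraph V) (S : Set V) : Γ ↪g addVertex Γ S where
  toEmbedding := Function.Embedding.some
  map_rel_iff' := Iff.rfl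

@[simp]
theorem someEmbedding_apply (v : V) : someEmbedding Γ S v = some v := rfl

section Group

open HNNExtension GG

theorem commute_gen_none {g : GG Γ} (hg : g ∈ parabolic Γ Sᶜ) :
    Commute (gen (addVertex Γ S) none) (map (someEmbedding Γ S) g) := by
  refine commute_of_mem_parabolic ?_ (gen_mem_parabolic (Set.mem_singleton none))
    (map_mem_parabolic_image _ hg)
  rintro _ rfl _ ⟨v, hv, rfl⟩
  exact hv

variable (Γ S) in
/-- The HNN extension of `G(Γ)` whose stable letter centralises the parabolic subgroup of the
vertices outside `S`. -/
abbrev HNN : Type :=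
  HNNExtension (GG Γ) (parabolic Γ Sᶜ) (parabolic Γ Sᶜ) (MulEquiv.refl _)

theorem commute_t_of {g : GG Γ} (hg : g ∈ parabolic Γ Sᶜ) : Commute (t : HNN Γ S) (of g) :=
  t_mul_of (φ := MulEquiv.refl _) ⟨g, hg⟩

variable (Γ S) in
/-- The homomorphism sending the generator `none` to the stable letter. -/
def toHNN : GG (addVertex Γ S) →* HNN Γ S :=
  lift (fun o ↦ o.elim t fun v ↦ of (gen Γ v)) <| by
    rintro (_ | u) (_ | v) - h
    · exact Commute.refl _
    · exact commute_t_of (gen_mem_parabolic h)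
    · exact (commute_t_of (gen_mem_parabolic h)).symm
    · exact (gen_commute_gen (Γ := Γ) h).map (of : GG Γ →* HNN Γ S)

@[simp]
theorem toHNN_gen_none : toHNN Γ S (gen _ none) = t :=
  lift_gen ..

@[simp]
theorem toHNN_gen_some (v : V) : toHNN Γ S (gen _ (some v)) = of (gen Γ v) :=
  lift_gen ..

variable (Γ S) in
/-- The homomorphism sending the stable letter to the generator `none`. -/
def ofHNN : HNN Γ S →* GG (addVertex Γ S) :=
  HNNExtension.lift (map (someEmbedding Γ S)) (gen _ none) fun a ↦ commute_gen_none a.2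

@[simp]
theorem ofHNN_t : ofHNN Γ S t = gen _ none :=
  lift_t ..

@[simp]
theorem ofHNN_of (g : GG Γ) : ofHNN Γ S (of g) = map (someEmbedding Γ S) g :=
  lift_of ..

variable (Γ S) in
/-- Adding a vertex with neighbours `S` is an HNN extension of the group, with the new generator
as stable letter. -/
def hnnEquiv : GG (addVertex Γ S) ≃* HNN Γ S :=
  (toHNN Γ S).toMulEquiv (ofHNN Γ S) (GG.hom_ext (by rintro (_ | v) <;> simp))
    (HNNExtension.hom_ext (GG.hom_ext fun v ↦ by simp) (by simp))

theorem hnnEquiv_gen_none : hnnEquiv Γ S (gen _ none) = t :=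
  toHNN_gen_none

theorem hnnEquiv_map (g : GG Γ) : hnnEquiv Γ S (map (someEmbedding Γ S) g) = of g := by
  rw [← ofHNN_of]
  exact (hnnEquiv Γ S).apply_symm_apply (of g)

theorem comap_hnnEquiv_range_of :
    (of : GG Γ →* HNN Γ S).range.comap (hnnEquiv Γ S).toMonoidHom =
      parabolic (addVertex Γ S) {none}ᶜ := by
  have range_some : Set.range (someEmbedding Γ S) = {none}ᶜ := (Set.compl_range_some V).symm ▸
    (compl_compl _).symm
  rw [← range_some, ← range_map]
  ext g
  refine exists_congr fun k ↦ ?_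
  rw [← hnnEquiv_map]
  exact (hnnEquiv Γ S).injective.eq_iff

theorem conj_gen_none_mem_parabolic_iff {g : GG Γ} :
    gen _ none * map (someEmbedding Γ S) g * (gen _ none)⁻¹ ∈ parabolic (addVertex Γ S) {none}ᶜ ↔
      g ∈ parabolic Γ Sᶜ := by
  have image_conj : hnnEquiv Γ S (gen _ none * map (someEmbedding Γ S) g * (gen _ none)⁻¹) =
      t * of g * t⁻¹ := by
    rw [map_mul, map_mul, map_inv, hnnEquiv_gen_none, hnnEquiv_map]
  rw [← comap_hnnEquiv_range_of, Subgroup.mem_comap]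
  exact image_conj ▸ conj_t_mem_range_of_iff

end Group

section Tree

variable {R : Set V}

theorem connected (h : ∀ v, ∃ r ∈ R, Γ.Reachable r v) : (addVertex Γ R).Connected := by
  refine (connected_iff_exists_forall_reachable _).mpr ⟨none, ?_⟩
  rintro (_ | v)
  · exact Reachable.refl _
  · obtain ⟨r, hr, hrv⟩ := h v
    exact (adj_none_some.mpr hr).reachable.trans (hrv.map (someEmbedding Γ R).toHom)

theorem edgeSet_eq :
    (addVertex Γ R).edgeSet = Sym2.map some '' Γ.edgeSet ∪ (fun r ↦ s(none, some r)) '' R := by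
  ext e
  induction e with | _ x y
  obtain _ | u := x <;> obtain _ | v := y
  · simp [Sym2.exists]
  · simp [Sym2.exists]
  · simp [Sym2.exists]
  · have notMem_star : s(some u, some v) ∉ (fun r ↦ s(none, some r)) '' R := by simp
    have mem_old : s(some u, some v) ∈ Sym2.map some '' Γ.edgeSet ↔ s(u, v) ∈ Γ.edgeSet := by
      rw [← Sym2.map_mk, (Sym2.map.injective (Option.some_injective V)).mem_set_image]
    rw [Set.mem_union, or_iff_left notMem_star, mem_old]
    rfl

theorem card_edgeSet [Finite V] :
    Nat.card (addVertex Γ R).edgeSet = Nat.card Γ.edgeSet + R.ncard := by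
  have disj : Disjoint (Sym2.map some '' Γ.edgeSet) ((fun r : V ↦ s(none, some r)) '' R) := by
    rw [Set.disjoint_left]
    rintro _ ⟨e, -, rfl⟩ ⟨r, -, hr⟩
    induction e with | _ x y
    simp at hr
  rw [edgeSet_eq, Nat.card_coe_set_eq, Set.ncard_union_eq disj,
    Set.ncard_image_of_injective _ (Sym2.map.injective (Option.some_injective V)),
    Set.ncard_image_of_injective _ fun _ _ h ↦ by simpa using h, Nat.card_coe_set_eq]

theorem isTree [Finite V] (hreach : ∀ v, ∃ r ∈ R, Γ.Reachable r v)
    (hcard : Nat.card Γ.edgeSet + R.ncard = Nat.card V) : (addVertex Γ R).IsTree :=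
  isTree_iff_connected_and_card.mpr
    ⟨connected hreach, by rw [card_edgeSet, hcard, Finite.card_option]⟩

theorem neighborSet_none : (addVertex Γ R).neighborSet none = some '' R := by
  ext (_ | v) <;> simp [addVertex]

theorem neighborSet_some_of_mem (hv : v ∈ R) :
    (addVertex Γ R).neighborSet (some v) = insert none (some '' Γ.neighborSet v) := by
  ext (_ | w) <;> simp [hv]

theorem neighborSet_some_of_notMem (hv : v ∉ R) :
    (addVertex Γ R).neighborSet (some v) = some '' Γ.neighborSet v := by
  ext (_ | w) <;> simp [hv]

end Tree

end addVertex

/-- The pair `(Γ, S)` embeds in the pair `(Δ, R)`: some injective homomorphism `G(Γ) → G(Δ)` maps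
exactly the parabolic subgroup of the vertices outside `S` into that of the vertices outside `R`. -/
def RelEmbeds {V W : Type} (Γ : SimpleGraph V) (S : Set V) (Δ : SimpleGraph W) (R : Set W) :
    Prop :=
  ∃ φ : GG Γ →* GG Δ, Function.Injective φ ∧
    (GG.parabolic Δ Rᶜ).comap φ = GG.parabolic Γ Sᶜ

namespace RelEmbeds

open GG HNNExtension

variable {V W X : Type} {Γ : SimpleGraph V} {Δ : SimpleGraph W} {Θ : SimpleGraph X}
  {S : Set V} {R : Set W} {Q : Set X}

theorem trans (h₁ : RelEmbeds Γ S Δ R) (h₂ : RelEmbeds Δ R Θ Q) : RelEmbeds Γ S Θ Q := by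
  obtain ⟨φ, hφ, hφR⟩ := h₁
  obtain ⟨ψ, hψ, hψQ⟩ := h₂
  exact ⟨ψ.comp φ, hψ.comp hφ, by rw [← Subgroup.comap_comap, hψQ, hφR]⟩

theorem of_embedding (f : Γ ↪g Δ) (R : Set W) : RelEmbeds Γ (f ⁻¹' R) Δ R :=
  ⟨GG.map f, map_injective f, by rw [comap_map_parabolic, Set.preimage_compl]⟩

theorem of_isEmpty [IsEmpty V] : RelEmbeds Γ S Δ R := by
  have := GG.subsingleton (Γ := Γ)
  exact ⟨1, Function.injective_of_subsingleton _, Subsingleton.elim _ _⟩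

theorem to_addVertex (Γ : SimpleGraph V) (S : Set V) :
    RelEmbeds Γ S (addVertex Γ S) {none} := by
  refine ⟨(MulAut.conj (gen _ none)).toMonoidHom.comp (GG.map (addVertex.someEmbedding Γ S)),
    (MulAut.conj _).injective.comp (map_injective _), ?_⟩
  ext g
  exact addVertex.conj_gen_none_mem_parabolic_iff

protected theorem addVertex (h : RelEmbeds Γ S Δ R) :
    RelEmbeds (addVertex Γ S) {none} (addVertex Δ R) {none} := by
  obtain ⟨φ, hφ, hφR⟩ := h
  let ψ : addVertex.HNN Γ S →* addVertex.HNN Δ R :=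
    hnnMap φ fun a ↦ ⟨⟨φ a, hφR.ge a.2⟩, rfl, rfl⟩
  have hψ : Function.Injective ψ := hnnMap_injective hφ hφR.le hφR.le
  have hψ_base : (of : GG Δ →* addVertex.HNN Δ R).range.comap ψ = of.range :=
    comap_hnnMap_range_of hφR.le hφR.le
  refine ⟨(addVertex.hnnEquiv Δ R).symm.toMonoidHom.comp
    (ψ.comp (addVertex.hnnEquiv Γ S).toMonoidHom), (addVertex.hnnEquiv Δ R).symm.injective.comp
      (hψ.comp (addVertex.hnnEquiv Γ S).injective), ?_⟩
  rw [← addVertex.comap_hnnEquiv_range_of, ← addVertex.comap_hnnEquiv_range_of, ← hψ_base]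
  ext g
  simp [Subgroup.mem_comap]

protected theorem sum {S₁ S₂ : Set V} {R : Set (W ⊕ X)} (h₁ : RelEmbeds Γ S₁ Δ (Sum.inl ⁻¹' R))
    (h₂ : RelEmbeds Γ S₂ Θ (Sum.inr ⁻¹' R)) : RelEmbeds Γ (S₁ ∪ S₂) (Δ ⊕g Θ) R := by
  obtain ⟨φ₁, hφ₁, hR₁⟩ := h₁
  obtain ⟨φ₂, -, hR₂⟩ := h₂
  refine ⟨(prodToSum Δ Θ).comp (φ₁.prod φ₂), prodToSum_injective.comp fun g h hgh ↦
    hφ₁ (congrArg Prod.fst hgh), ?_⟩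
  rw [← Subgroup.comap_comap, comap_prodToSum_parabolic, Set.compl_union, ← parabolic_inf_parabolic,
    ← hR₁, ← hR₂]
  rfl

end RelEmbeds

/-- A tree `T` of maximum degree at most `3` with a chosen root `r` of degree at most `2`. -/
structure IsSubcubicRootedTree {W : Type} (T : SimpleGraph W) (r : W) : Prop where
  isTree : T.IsTree
  ncard_neighborSet_le (w : W) : (T.neighborSet w).ncard ≤ 3
  ncard_neighborSet_root_le : (T.neighborSet r).ncard ≤ 2

namespace IsSubcubicRootedTree

variable {W W₁ W₂ : Type}

theorem bot [Subsingleton W] (r : W) : IsSubcubicRootedTree (⊥ : SimpleGraph W) r where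
  isTree := have : Nonempty W := ⟨r⟩; .of_subsingleton
  ncard_neighborSet_le w := by simp
  ncard_neighborSet_root_le := by simp

theorem of_forest [Finite W] {F : SimpleGraph W} {R : Set W}
    (hF : ∀ w, (F.neighborSet w).ncard ≤ 3)
    (hFR : ∀ r ∈ R, (F.neighborSet r).ncard ≤ 2) (hR : R.ncard ≤ 2)
    (hreach : ∀ w, ∃ r ∈ R, F.Reachable r w)
    (hcard : Nat.card F.edgeSet + R.ncard = Nat.card W) :
    IsSubcubicRootedTree (addVertex F R) none := by
  have deg_none : ((addVertex F R).neighborSet none).ncard ≤ 2 := by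
    rwa [addVertex.neighborSet_none, Set.ncard_image_of_injective _ (Option.some_injective W)]
  refine ⟨addVertex.isTree hreach hcard, ?_, deg_none⟩
  rintro (_ | w)
  · exact deg_none.trans (by norm_num)
  · by_cases hw : w ∈ R
    · rw [addVertex.neighborSet_some_of_mem hw]
      refine (Set.ncard_insert_le _ _).trans (Nat.succ_le_succ ?_)
      rw [Set.ncard_image_of_injective _ (Option.some_injective W)]
      exact hFR w hw
    · rw [addVertex.neighborSet_some_of_notMem hw,
        Set.ncard_image_of_injective _ (Option.some_injective W)]
      exact hF w

theorem addVertex_root [Finite W] {T : SimpleGraph W} {r : W} (h : IsSubcubicRootedTree T r) :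
    IsSubcubicRootedTree (addVertex T {r}) none := by
  refine of_forest h.ncard_neighborSet_le ?_ ?_ (fun w ↦ ⟨r, rfl, h.isTree.connected r w⟩) ?_
  · rintro _ rfl
    exact h.ncard_neighborSet_root_le
  · simp
  · rw [Set.ncard_singleton, (isTree_iff_connected_and_card.mp h.isTree).2]

theorem addVertex_sum_roots [Finite W₁] [Finite W₂] {T₁ : SimpleGraph W₁} {T₂ : SimpleGraph W₂}
    {r₁ : W₁} {r₂ : W₂} (h₁ : IsSubcubicRootedTree T₁ r₁) (h₂ : IsSubcubicRootedTree T₂ r₂) :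
    IsSubcubicRootedTree (addVertex (T₁ ⊕g T₂) {.inl r₁, .inr r₂}) none := by
  have hroots : ({.inl r₁, .inr r₂} : Set (W₁ ⊕ W₂)).ncard = 2 := Set.ncard_pair Sum.inl_ne_inr
  have deg_inl (w) : ((T₁ ⊕g T₂).neighborSet (.inl w)).ncard = (T₁.neighborSet w).ncard := by
    rw [neighborSet_sum_inl, Set.ncard_image_of_injective _ Sum.inl_injective]
  have deg_inr (w) : ((T₁ ⊕g T₂).neighborSet (.inr w)).ncard = (T₂.neighborSet w).ncard := by
    rw [neighborSet_sum_inr, Set.ncard_image_of_injective _ Sum.inr_injective]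
  refine of_forest ?_ ?_ hroots.le ?_ ?_
  · rintro (w | w)
    · exact (deg_inl w).trans_le (h₁.ncard_neighborSet_le w)
    · exact (deg_inr w).trans_le (h₂.ncard_neighborSet_le w)
  · rintro _ (rfl | rfl)
    · exact (deg_inl r₁).trans_le h₁.ncard_neighborSet_root_le
    · exact (deg_inr r₂).trans_le h₂.ncard_neighborSet_root_le
  · rintro (w | w)
    · exact ⟨.inl r₁, .inl rfl, (h₁.isTree.connected r₁ w).map Embedding.sumInl.toHom⟩
    · exact ⟨.inr r₂, .inr rfl, (h₂.isTree.connected r₂ w).map Embedding.sumInr.toHom⟩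
  · have card₁ := (isTree_iff_connected_and_card.mp h₁.isTree).2
    have card₂ := (isTree_iff_connected_and_card.mp h₂.isTree).2
    rw [hroots, Nat.card_congr edgeSetSumEquiv, Nat.card_sum, Nat.card_sum]
    lia

end IsSubcubicRootedTree

/-- The pair `(Γ, S)` embeds in a finite subcubic tree paired with its root. -/
def TreeRepresentable {V : Type} (Γ : SimpleGraph V) (S : Set V) : Prop :=
  ∃ (W : Type) (_ : Finite W) (T : SimpleGraph W) (r : W),
    IsSubcubicRootedTree T r ∧ RelEmbeds Γ S T {r}

namespace TreeRepresentable

variable {V W : Type} {Γ : SimpleGraph V} {Δ : SimpleGraph W} {S S₁ S₂ : Set V} {R : Set W}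

theorem of_embedding (f : Γ ↪g Δ) (h : TreeRepresentable Δ R) :
    TreeRepresentable Γ (f ⁻¹' R) := by
  obtain ⟨W, hW, T, r, hT, hR⟩ := h
  exact ⟨W, hW, T, r, hT, (RelEmbeds.of_embedding f R).trans hR⟩

theorem of_isEmpty [IsEmpty V] : TreeRepresentable Γ S :=
  ⟨Unit, inferInstance, ⊥, (), .bot (), .of_isEmpty⟩

protected theorem addVertex (h : TreeRepresentable Γ S) :
    TreeRepresentable (addVertex Γ S) {none} := by
  obtain ⟨W, _, T, r, hT, hS⟩ := h
  exact ⟨Option W, inferInstance, _, none, hT.addVertex_root, hS.addVertex⟩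

protected theorem empty (h : TreeRepresentable Γ S) : TreeRepresentable Γ ∅ := by
  have preimage_none : addVertex.someEmbedding Γ S ⁻¹' {none} = ∅ := by ext; simp
  exact preimage_none ▸ h.addVertex.of_embedding (addVertex.someEmbedding Γ S)

protected theorem union (h₁ : TreeRepresentable Γ S₁) (h₂ : TreeRepresentable Γ S₂) :
    TreeRepresentable Γ (S₁ ∪ S₂) := by
  obtain ⟨W₁, _, T₁, r₁, hT₁, hS₁⟩ := h₁
  obtain ⟨W₂, _, T₂, r₂, hT₂, hS₂⟩ := h₂
  have hS : RelEmbeds Γ (S₁ ∪ S₂) (T₁ ⊕g T₂) {.inl r₁, .inr r₂} :=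
    .sum (by convert hS₁; ext; simp) (by convert hS₂; ext; simp)
  exact ⟨Option (W₁ ⊕ W₂), inferInstance, _, none, hT₁.addVertex_sum_roots hT₂,
    hS.trans (.to_addVertex _ _)⟩

theorem of_forall_singleton [Finite V] [Nonempty V] (h : ∀ v, TreeRepresentable Γ {v})
    (S : Set V) : TreeRepresentable Γ S := by
  induction S, S.toFinite using Set.Finite.induction_on with
  | empty => exact (h (Classical.arbitrary V)).empty
  | insert _ _ ih => exact (h _).union ih

theorem option_singleton (h : ∀ (Γ : SimpleGraph V) (S : Set V), TreeRepresentable Γ S)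
    (Δ : SimpleGraph (Option V)) (v : Option V) : TreeRepresentable Δ {v} := by
  classical
  let Δ' := Δ.comap (Equiv.swap none v)
  let f : Δ ↪g Δ' := (Iso.comap (Equiv.swap none v) Δ).symm.toEmbedding
  have preimage_none : f ⁻¹' {none} = {v} := by
    ext w
    exact (Equiv.symm_apply_eq _).trans (by simp)
  have hΔ' : TreeRepresentable Δ' {none} := addVertex.comap_some_eq Δ' ▸ (h _ _).addVertex
  exact preimage_none ▸ hΔ'.of_embedding f

theorem of_finite [Finite V] (Γ : SimpleGraph V) (S : Set V) : TreeRepresentable Γ S := by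
  induction V using Finite.induction_empty_option with
  | of_equiv e h =>
    rw [← e.symm_preimage_preimage S]
    exact (h _ _).of_embedding (Iso.comap e Γ).symm.toEmbedding
  | h_empty => exact of_isEmpty
  | h_option h => exact of_forall_singleton (option_singleton h Γ) S

end TreeRepresentable

/-- For every finite graph `Λ` there is a finite tree `T` of maximum degree at most 3
with `G(Λ) ↪ G(T)`. -/
theorem statement9 {V : Type} [Fintype V] (Λ : SimpleGraph V) :
    ∃ (W : Type) (_ : Fintype W) (T : SimpleGraph W), T.IsTree ∧
      (∀ w : W, (T.neighborSet w).ncard ≤ 3) ∧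
      ∃ φ : GG Λ →* GG T, Function.Injective φ := by
  obtain ⟨W, _, T, r, hT, φ, hφ, -⟩ := TreeRepresentable.of_finite Λ ∅
  exact ⟨W, Fintype.ofFinite W, T, hT.isTree, hT.ncard_neighborSet_le, φ, hφ⟩
end
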